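/- Let $(M,\omega)$ be a compact connected symplectic manifold with a smooth hamiltonian action of a compact connected Lie group $G$. Let $J_0$ be a $G$-invariant integrable almost complex structure compatible with $\omega$, and let $g_0=\omega(\cdot,J_0\cdot)$ be its Kähler metric. Assume that the reduced scalar curvature $$S^G(J_0)=S-\underline S-\Pi^G S$$ vanishes, where $S$ is the scalar curvature of $g_0$, $\underline S$ its mean value with respect to $\omega^n/n!$, and $\Pi^G$ the $L^2$-orthogonal projection to the space of Killing potentials of mean value zero whose hamiltonian vector field is a fundamental vector field of the action of $G$; in particular $g_0$ is extremal. Let $H$ be the group of hamiltonian diffeomorphisms of $(M,\omega)$, $Z(G,H)$ the centralizer in $H$ of (the image of) $G$, and $\mathcal G=Z(G,H)/(Z(G,H)\cap G)$. Let $\mathfrak z$ be the Lie algebra of $Z(G,H)$, consisting of the hamiltonian vector fields whose flow lies in $Z(G,H)$ (equivalently, of their potentials modulo constants, with the Poisson bracket), and let $\mathfrak g$ be the Lie algebra of the fundamental vector fields of the action. Then $\mathfrak g\cap\mathfrak z$ is an ideal of $\mathfrak z$, and $\mathfrak z/(\mathfrak g\cap\mathfrak z)$ is the Lie algebra of $\mathcal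 G$. Let $K\subseteq\mathcal G$ be the connected component of the identity in the stabilizer of $J_0$, and let $\mathfrak k\subseteq\mathfrak z/(\mathfrak g\cap\mathfrak z)$ be its Lie algebra, i.e. the set of $\xi$ with $\exp(t\xi)\in K$ for all $t\in\mathbb R$. Then there is a Lie algebra homomorphism $\ell:\mathfrak k\to\mathfrak z$ that lifts the inclusion, i.e. the class of $\ell(\xi)$ in $\mathfrak z/(\mathfrak g\cap\mathfrak z)$ is $\xi$ for all $\xi\in\mathfrak k$, and such that every $\ell(\xi)$ is a hamiltonian Killing vector field for $g_0$. -/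

import Mathlib

open Set MeasureTheory Bundle VectorField
open scoped Manifold ContDiff Matrix

noncomputable section

namespace HamAction

/-! ### Smooth vector fields -/

section VectorFields

variable (m : ℕ) (M : Type*) [TopologicalSpace M] [ChartedSpace (EuclideanSpace ℝ (Fin m)) M]

/-- Smooth vector fields on a manifold `M` of dimension `m` without boundary. -/
abbrev VF [IsManifold (𝓡 m) ∞ M] : Type _ :=
  ContMDiffSection (𝓡 m) (EuclideanSpace ℝ (Fin m)) ∞ (TangentSpace (𝓡 m) : M → Type _)

/-- Families of real functions of two tangent vectors at each point of `M`, such as fields of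
bilinear forms. -/
abbrev BilinField : Type _ :=
  ∀ x : M, TangentSpace (𝓡 m) x → TangentSpace (𝓡 m) x → ℝ

/-- Fields of endomorphisms of the tangent spaces. -/
abbrev EndField : Type _ :=
  ∀ x : M, TangentSpace (𝓡 m) x →L[ℝ] TangentSpace (𝓡 m) x

variable {m M} [IsManifold (𝓡 m) ∞ M]

theorem VF.mdiff (X : VF m M) (x : M) : 
    MDifferentiableAt (𝓡 m) (𝓡 m).tangent
      (fun y => (⟨y, X y⟩ : TangentBundle (𝓡 m) M)) x :=
  X.contMDiff.mdifferentiable (by simp) x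

/-- The Lie bracket of vector fields. -/
instance : Bracket (VF m M) (VF m M) where
  bracket X Y :=
    ⟨mlieBracket (𝓡 m) X Y, by
      have : IsManifold (𝓡 m) (((⊤ : ℕ∞) : WithTop ℕ∞) + 1) M := by
        simpa using (inferInstance : IsManifold (𝓡 m) ∞ M)
      have : IsManifold (𝓡 m) (minSmoothness ℝ 2) M := by
        simp only [minSmoothness_of_isRCLikeNormedField]
        infer_instance
      exact ContDiff.mlieBracket_vectorField (m := ⊤) (n := ⊤) X.contMDiff Y.contMDiff (by simp)⟩

theorem VF.bracket_apply (X Y : VF m M) (x : M) : ⁅X, Y⁆ x = mlieBracket (𝓡 m) X Y x := rfl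

instance : LieRing (VF m M) where
  add_lie X Y Z := by
    ext1 x
    simp only [VF.bracket_apply, ContMDiffSection.coe_add, Pi.add_apply]
    exact mlieBracket_add_left (X.mdiff x) (Y.mdiff x)
  lie_add X Y Z := by
    ext1 x
    simp only [VF.bracket_apply, ContMDiffSection.coe_add, Pi.add_apply]
    exact mlieBracket_add_right (Y.mdiff x) (Z.mdiff x)
  lie_self X := by
    ext1 x
    simp [VF.bracket_apply]
  leibniz_lie X Y Z := by
    have : IsManifold (𝓡 m) (minSmoothness ℝ 3) M := by
      simp only [minSmoothness_of_isRCLikeNormedField]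
      infer_instance
    have h : ∀ W : VF m M, ContMDiff (𝓡 m) (𝓡 m).tangent (minSmoothness ℝ 2)
        (fun y => (⟨y, W y⟩ : TangentBundle (𝓡 m) M)) := by
      intro W
      simp only [minSmoothness_of_isRCLikeNormedField]
      exact W.contMDiff.of_le (ENat.LEInfty.out)
    ext1 x
    exact leibniz_identity_mlieBracket_apply (h X x) (h Y x) (h Z x)

instance : LieAlgebra ℝ (VF m M) where
  lie_smul c X Y := by
    ext1 x
    exact mlieBracket_const_smul_right (Y.mdiff x)

end VectorFields

/-! ### Symplectic forms and compatible almost complex structures -/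

section Structures

variable (m : ℕ) (M : Type*) [TopologicalSpace M] [ChartedSpace (EuclideanSpace ℝ (Fin m)) M]
  [IsManifold (𝓡 m) ∞ M]

/-- The derivative `df_x(v)` of a real function. -/
abbrev dd {m : ℕ} {M : Type*} [TopologicalSpace M] [ChartedSpace (EuclideanSpace ℝ (Fin m)) M]
    (f : M → ℝ) (x : M) (v : TangentSpace (𝓡 m) x) : ℝ :=
  mfderiv (𝓡 m) 𝓘(ℝ, ℝ) f x v

/-- Symplectic forms: smooth, alternating, non-degenerate and closed. Closedness is expressed by
the invariant formula for `dΩ(X, Y, Z)`. -/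
structure SymplecticForm where
  form : ∀ x : M, TangentSpace (𝓡 m) x →L[ℝ] TangentSpace (𝓡 m) x →L[ℝ] ℝ
  smooth : ContMDiff (𝓡 m)
    ((𝓡 m).prod 𝓘(ℝ, EuclideanSpace ℝ (Fin m) →L[ℝ] EuclideanSpace ℝ (Fin m) →L[ℝ] ℝ)) ∞
    (fun x => TotalSpace.mk'
      (EuclideanSpace ℝ (Fin m) →L[ℝ] EuclideanSpace ℝ (Fin m) →L[ℝ] ℝ) x (form x))
  alternating : ∀ x v, form x v v = 0
  nondegenerate : ∀ x v, (∀ w, form x v w = 0) → v = 0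
  closed : ∀ (X Y Z : VF m M) (x : M),
    dd (fun y => form y (Y y) (Z y)) x (X x)
      - dd (fun y => form y (X y) (Z y)) x (Y x)
      + dd (fun y => form y (X y) (Y y)) x (Z x)
      - form x (⁅X, Y⁆ x) (Z x) + form x (⁅X, Z⁆ x) (Y x) - form x (⁅Y, Z⁆ x) (X x) = 0

variable {m M}

/-- `f` is a hamiltonian potential of `X`: `Ω(X, ·) = df`. -/
def IsPotential (Ω : SymplecticForm m M) (f : M → ℝ) (X : VF m M) : Prop :=
  ContMDiff (𝓡 m) 𝓘(ℝ, ℝ) ∞ f ∧ ∀ x v, Ω.form x (X x) v = dd f x v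

/-- Hamiltonian vector fields. -/
def IsHamiltonianVF (Ω : SymplecticForm m M) (X : VF m M) : Prop :=
  ∃ f : M → ℝ, IsPotential Ω f X

/-- Almost complex structures compatible with `Ω`: `J² = -1`, `J` preserves `Ω`, and
`Ω(v, Jv) > 0` for `v ≠ 0`. -/
structure CompatibleACS (Ω : SymplecticForm m M) where
  J : EndField m M
  smooth : ContMDiff (𝓡 m)
    ((𝓡 m).prod 𝓘(ℝ, EuclideanSpace ℝ (Fin m) →L[ℝ] EuclideanSpace ℝ (Fin m))) ∞
    (fun x => TotalSpace.mk' (EuclideanSpace ℝ (Fin m) →L[ℝ] EuclideanSpace ℝ (Fin m)) x (J x))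
  sq : ∀ x v, J x (J x v) = -v
  symplectic : ∀ x v w, Ω.form x (J x v) (J x w) = Ω.form x v w
  pos : ∀ x v, v ≠ 0 → 0 < Ω.form x v (J x v)

/-- The riemannian metric `g(v, w) = Ω(v, Jw)` of the pair `(Ω, J)`. -/
def CompatibleACS.metric {Ω : SymplecticForm m M} (j : CompatibleACS Ω) : BilinField m M :=
  fun x v w => Ω.form x v (j.J x w)

/-- The smooth vector field `JX`. -/
def CompatibleACS.apply {Ω : SymplecticForm m M} (j : CompatibleACS Ω) (X : VF m M) : VF m M :=
  ⟨fun x => j.J x (X x), j.smooth.clm_bundle_apply X.contMDiff⟩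

/-- Integrability: the Nijenhuis tensor vanishes. -/
def CompatibleACS.Integrable {Ω : SymplecticForm m M} (j : CompatibleACS Ω) : Prop :=
  ∀ X Y : VF m M,
    ⁅j.apply X, j.apply Y⁆ - j.apply ⁅j.apply X, Y⁆ - j.apply ⁅X, j.apply Y⁆ - ⁅X, Y⁆ = 0

/-- Killing vector fields of the metric `g`: the Lie derivative `L_X g` vanishes. -/
def IsKilling (g : BilinField m M) (X : VF m M) : Prop :=
  ∀ (Y Z : VF m M) (x : M),
    dd (fun y => g y (Y y) (Z y)) x (X x) = g x (⁅X, Y⁆ x) (Z x) + g x (Y x) (⁅X, Z⁆ x)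

end Structures

/-! ### Scalar curvature and Liouville measure, in charts -/

section Curvature

variable {m : ℕ} {M : Type*} [TopologicalSpace M] [ChartedSpace (EuclideanSpace ℝ (Fin m)) M]

/-- The coefficients `B(∂_i, ∂_j)` of a field of bilinear forms in the preferred chart at `x`, as
functions on the target of the chart. -/
def coeff (B : BilinField m M) (x : M) (y : EuclideanSpace ℝ (Fin m)) :
    Matrix (Fin m) (Fin m) ℝ :=
  Matrix.of fun i j =>
    B ((chartAt (EuclideanSpace ℝ (Fin m)) x).symm y)
      (mfderiv (𝓡 m) (𝓡 m) (chartAt (EuclideanSpace ℝ (Fin m)) x).symm y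
        (EuclideanSpace.single i (1 : ℝ)))
      (mfderiv (𝓡 m) (𝓡 m) (chartAt (EuclideanSpace ℝ (Fin m)) x).symm y
        (EuclideanSpace.single j (1 : ℝ)))

/-- The partial derivative `∂_i f`. -/
def pd (i : Fin m) (f : EuclideanSpace ℝ (Fin m) → ℝ) (y : EuclideanSpace ℝ (Fin m)) : ℝ :=
  fderiv ℝ f y (EuclideanSpace.single i (1 : ℝ))

/-- The Christoffel symbol `Γ^k_{ij}` of the metric with coefficients `A`. -/
def christoffel (A : EuclideanSpace ℝ (Fin m) → Matrix (Fin m) (Fin m) ℝ) (k i j : Fin m)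
    (y : EuclideanSpace ℝ (Fin m)) : ℝ :=
  (1 / 2) * ∑ l, (A y)⁻¹ k l *
    (pd i (fun z => A z j l) y + pd j (fun z => A z i l) y - pd l (fun z => A z i j) y)

/-- The Ricci tensor `R_{ij}` of the metric with coefficients `A`. -/
def ricci (A : EuclideanSpace ℝ (Fin m) → Matrix (Fin m) (Fin m) ℝ) (i j : Fin m)
    (y : EuclideanSpace ℝ (Fin m)) : ℝ :=
  ∑ k, (pd k (christoffel A k i j) y - pd j (christoffel A k i k) y)
    + ∑ k, ∑ l, (christoffel A k k l y * christoffel A l i j y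
      - christoffel A k j l y * christoffel A l i k y)

/-- The scalar curvature of the metric `g`. -/
def scalarCurvature (g : BilinField m M) (x : M) : ℝ :=
  ∑ i, ∑ j, (coeff g x (chartAt (EuclideanSpace ℝ (Fin m)) x x))⁻¹ i j *
    ricci (coeff g x) i j (chartAt (EuclideanSpace ℝ (Fin m)) x x)

variable [IsManifold (𝓡 m) ∞ M] [MeasurableSpace M]

/-- The measure `Ω^n / n!` on the domain of the preferred chart at `x`: in coordinates, the
Lebesgue measure with density the pfaffian `√(det Ω_{ij})`. -/
def chartLiouville (Ω : SymplecticForm m M) (x : M) : Measure M :=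
  Measure.map (chartAt (EuclideanSpace ℝ (Fin m)) x).symm
    ((volume.restrict (chartAt (EuclideanSpace ℝ (Fin m)) x).target).withDensity
      fun y => ENNReal.ofReal (Real.sqrt (coeff (fun z v w => Ω.form z v w) x y).det))

/-- The Liouville measure `Ω^n / n!`: the least measure that dominates its restrictions
`chartLiouville Ω x` to all chart domains. -/
def liouville (Ω : SymplecticForm m M) : Measure M := ⨆ x : M, chartLiouville Ω x

end Curvature

/-! ### The group action and the reduced scalar curvature -/

section Action

variable {m k : ℕ} {M : Type*} [TopologicalSpace M] [ChartedSpace (EuclideanSpace ℝ (Fin m)) M]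
  [IsManifold (𝓡 m) ∞ M]
  (G : Type*) [TopologicalSpace G] [ChartedSpace (EuclideanSpace ℝ (Fin k)) G] [Group G]
  [MulAction G M]

variable (m k M) in
/-- The Lie algebra `𝔤` of `G`, viewed as a set of vector fields on `M`: the fundamental vector
fields `x ↦ d/dt (exp(tξ) • x)` at `t = 0`, for `ξ` in the tangent space of `G` at `1`. -/
def fundamentalVF : Set (VF m M) :=
  {X | ∃ ξ : GroupLieAlgebra (𝓡 k) G, ∀ x : M,
    X x = (mfderiv (𝓡 k) (𝓡 m) (fun g : G => g • x) 1 ξ : EuclideanSpace ℝ (Fin m))}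

/-- The action of `G` is hamiltonian: it preserves `Ω` and every fundamental vector field has a
hamiltonian potential. -/
def IsHamiltonianAction (k : ℕ) [ChartedSpace (EuclideanSpace ℝ (Fin k)) G]
    (Ω : SymplecticForm m M) : Prop :=
  (∀ (g : G) (x : M) (v w : TangentSpace (𝓡 m) x),
    Ω.form (g • x) (mfderiv (𝓡 m) (𝓡 m) (fun y : M => g • y) x v)
      (mfderiv (𝓡 m) (𝓡 m) (fun y : M => g • y) x w) = Ω.form x v w) ∧
  ∀ X ∈ fundamentalVF m k M G, IsHamiltonianVF Ω X

/-- The diffeomorphism (or bijection) `φ` satisfies `φ_* J = J`, that is, `dφ ∘ J = J ∘ dφ`. -/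
def Preserves (φ : M → M) (J : EndField m M) : Prop :=
  ∀ (x : M) (v : TangentSpace (𝓡 m) x),
    mfderiv (𝓡 m) (𝓡 m) φ x (J x v) = J (φ x) (mfderiv (𝓡 m) (𝓡 m) φ x v)

theorem Preserves.inverse {J : EndField m M} {f g : M → M} (hf : Preserves f J)
    (df : MDifferentiable (𝓡 m) (𝓡 m) f) (dg : MDifferentiable (𝓡 m) (𝓡 m) g)
    (hgf : ∀ x, g (f x) = x) (hfg : ∀ x, f (g x) = x) : Preserves g J := by
  intro x v
  obtain ⟨y, rfl⟩ : ∃ y, f y = x := ⟨g x, hfg x⟩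
  let A : EuclideanSpace ℝ (Fin m) →L[ℝ] EuclideanSpace ℝ (Fin m) := mfderiv (𝓡 m) (𝓡 m) f y
  let L : EuclideanSpace ℝ (Fin m) →L[ℝ] EuclideanSpace ℝ (Fin m) := mfderiv (𝓡 m) (𝓡 m) g (f y)
  have hLA : ∀ u, L (A u) = u := by
    intro u
    have h := mfderiv_comp y (dg (f y)) (df y)
    rw [show g ∘ f = id from funext hgf, mfderiv_id] at h
    exact (congrArg (fun T : EuclideanSpace ℝ (Fin m) →L[ℝ] EuclideanSpace ℝ (Fin m) => T u) h).symm
  have hAL : ∀ u, A (L u) = u := by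
    intro u
    have hs : Function.Surjective A :=
      (LinearMap.injective_iff_surjective (f := A.toLinearMap)).1 (Function.LeftInverse.injective hLA)
    obtain ⟨w, rfl⟩ := hs u
    rw [hLA]
  have hJ : ∀ u : EuclideanSpace ℝ (Fin m),
      (J (g (f y)) u : EuclideanSpace ℝ (Fin m)) = J y u := by
    rw [hgf y]
    exact fun _ => rfl
  refine Eq.trans ?_ (hJ (L v)).symm
  have h1 : A (J y (L v)) = J (f y) v :=
    (hf y (L v)).trans (congrArg (J (f y)) (hAL v))
  exact (congrArg L h1.symm).trans (hLA _)

/-- `J` is `G`-invariant. -/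
def CompatibleACS.Invariant {Ω : SymplecticForm m M} (j : CompatibleACS Ω) : Prop :=
  ∀ g : G, Preserves (fun x : M => g • x) j.J

variable [MeasurableSpace M]

/-- The space `P^G` of Killing potentials of mean value zero whose hamiltonian vector field
lies in `𝔤`. -/
def killingPotentials (k : ℕ) [ChartedSpace (EuclideanSpace ℝ (Fin k)) G]
    {Ω : SymplecticForm m M} (j : CompatibleACS Ω) : Set (M → ℝ) :=
  {f | ∫ x, f x ∂(liouville Ω) = 0 ∧
    ∃ X ∈ fundamentalVF m k M G, IsPotential Ω f X ∧ IsKilling j.metric X}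

/-- `s` is the reduced scalar curvature `S - (mean of S) - Π^G S` of the Kähler metric `(Ω, J)`
relative to `G`, where `Π^G S = p` is the `L²`-orthogonal projection of the scalar curvature `S`
to `P^G`. -/
def IsReducedScalarCurvature (k : ℕ) [ChartedSpace (EuclideanSpace ℝ (Fin k)) G]
    {Ω : SymplecticForm m M} (j : CompatibleACS Ω) (s : M → ℝ) : Prop :=
  ∃ p ∈ killingPotentials G k j,
    (∀ q ∈ killingPotentials G k j,
      ∫ x, (scalarCurvature j.metric x - p x) * q x ∂(liouville Ω) = 0) ∧
    ∀ x, s x = scalarCurvature j.metric x - ⨍ y, scalarCurvature j.metric y ∂(liouville Ω) - p x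

end Action

/-! ### Groups of diffeomorphisms and their Lie algebras -/

section Groups

variable {m : ℕ} {M : Type*} [TopologicalSpace M] [ChartedSpace (EuclideanSpace ℝ (Fin m)) M]
  [IsManifold (𝓡 m) ∞ M]

variable (m M) in
/-- The group of diffeomorphisms of `M`. -/
def Diff : Subgroup (Equiv.Perm M) where
  carrier := {φ | ContMDiff (𝓡 m) (𝓡 m) ∞ φ ∧ ContMDiff (𝓡 m) (𝓡 m) ∞ (φ⁻¹ : Equiv.Perm M)}
  mul_mem' {φ ψ} hφ hψ := ⟨hφ.1.comp hψ.1, by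
    rw [mul_inv_rev]
    exact hψ.2.comp hφ.2⟩
  one_mem' := ⟨contMDiff_id, contMDiff_id⟩
  inv_mem' {φ} hφ := ⟨hφ.2, by rw [inv_inv]; exact hφ.1⟩

/-- `φ` is a hamiltonian isotopy with time-dependent hamiltonian `F`:
`φ_0 = 1` and `Ω(d/dt φ_t, ·) = dF_t` along `φ_t`. -/
def IsHamiltonianIsotopy (Ω : SymplecticForm m M) (F : ℝ → M → ℝ) (φ : ℝ → Equiv.Perm M) : Prop :=
  ContMDiff (𝓘(ℝ, ℝ).prod (𝓡 m)) 𝓘(ℝ, ℝ) ∞ (fun p : ℝ × M => F p.1 p.2) ∧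
  ContMDiff (𝓘(ℝ, ℝ).prod (𝓡 m)) (𝓡 m) ∞ (fun p : ℝ × M => φ p.1 p.2) ∧
  (∀ t, φ t ∈ Diff m M) ∧ φ 0 = 1 ∧
  ∀ (t : ℝ) (x : M) (v : TangentSpace (𝓡 m) (φ t x)),
    Ω.form (φ t x) (mfderiv 𝓘(ℝ, ℝ) (𝓡 m) (fun s : ℝ => φ s x) t (1 : ℝ)) v = dd (F t) (φ t x) v

/-- The group `H` of hamiltonian diffeomorphisms. Its generators, the time-one maps of hamiltonian
isotopies, already form a group. -/
def Ham (Ω : SymplecticForm m M) : Subgroup (Equiv.Perm M) :=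
  Subgroup.closure {ψ | ∃ F φ, IsHamiltonianIsotopy Ω F φ ∧ φ 1 = ψ}

theorem Ham_le_Diff (Ω : SymplecticForm m M) : Ham Ω ≤ Diff m M := by
  refine (Subgroup.closure_le _).2 ?_
  rintro ψ ⟨F, φ, h, rfl⟩
  exact h.2.2.1 1

variable (G : Type*) [Group G] [MulAction G M]

/-- The centralizer `Z(G, H)` of (the image of) `G` in `H`. -/
def ZGH (Ω : SymplecticForm m M) : Subgroup (Equiv.Perm M) :=
  Ham Ω ⊓ Subgroup.centralizer ((MulAction.toPermHom G M).range : Set (Equiv.Perm M))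

theorem ZGH.mem_Diff {Ω : SymplecticForm m M} (φ : ZGH G Ω) : (φ : Equiv.Perm M) ∈ Diff m M :=
  Ham_le_Diff Ω φ.2.1

/-- The subgroup `Z(G, H) ∩ G` of `Z(G, H)`. -/
def ZcapG (Ω : SymplecticForm m M) : Subgroup (ZGH G Ω) :=
  (MulAction.toPermHom G M).range.subgroupOf (ZGH G Ω)

instance (Ω : SymplecticForm m M) : (ZcapG G Ω).Normal where
  conj_mem n hn z := by
    have h : z * n * z⁻¹ = n := by
      rw [mul_inv_eq_iff_eq_mul]
      exact Subtype.ext ((Subgroup.mem_centralizer_iff.1 z.2.2) _ hn).symm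
    rwa [h]

/-- The group `𝒢 = Z(G, H) / (Z(G, H) ∩ G)`. -/
abbrev GG (Ω : SymplecticForm m M) : Type _ := ZGH G Ω ⧸ ZcapG G Ω

/-- The topology of `𝒢`: the quotient of the compact-open topology on `Z(G, H)`. (It is only used on
the stabilizer of `J`, whose elements lift to isometries of `(Ω, J)`; for isometries the compact-open
and the `C^∞` topology agree.) -/
abbrev topGG (Ω : SymplecticForm m M) : TopologicalSpace (GG G Ω) :=
  TopologicalSpace.coinduced (QuotientGroup.mk : ZGH G Ω → GG G Ω)
    (TopologicalSpace.induced
      (fun φ : ZGH G Ω => (⟨φ.1, (ZGH.mem_Diff G φ).1.continuous⟩ : C(M, M))) inferInstance)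

/-- The elements `φ` of `Z(G, H)` with `φ_* J = J`. -/
def stabZ {Ω : SymplecticForm m M} (j : CompatibleACS Ω) : Subgroup (ZGH G Ω) where
  carrier := {φ | Preserves (φ : Equiv.Perm M) j.J}
  mul_mem' {φ ψ} hφ hψ := by
    have dφ := (ZGH.mem_Diff G φ).1.mdifferentiable (by simp)
    have dψ := (ZGH.mem_Diff G ψ).1.mdifferentiable (by simp)
    intro x v
    have h := mfderiv_comp x (dφ (ψ.1 x)) (dψ x)
    have h' : ⇑((φ * ψ : ZGH G Ω) : Equiv.Perm M) = φ.1 ∘ ψ.1 := rfl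
    rw [h', h]
    exact (congrArg (mfderiv (𝓡 m) (𝓡 m) φ.1 (ψ.1 x)) (hψ x v)).trans (hφ _ _)
  one_mem' := by
    intro x v
    have h' : ⇑((1 : ZGH G Ω) : Equiv.Perm M) = id := rfl
    rw [h', mfderiv_id]
    rfl
  inv_mem' {φ} hφ := by
    have dφ := (ZGH.mem_Diff G φ).1.mdifferentiable (by simp)
    have dψ := (ZGH.mem_Diff G φ).2.mdifferentiable (by simp)
    exact Preserves.inverse hφ dφ dψ (fun x => φ.1.symm_apply_apply x)
      (fun x => φ.1.apply_symm_apply x)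

/-- The stabilizer of `J` in `𝒢`; as `G` preserves `J`, it consists of the classes of the elements
of `Z(G, H)` that preserve `J`. -/
def stabGG {Ω : SymplecticForm m M} (j : CompatibleACS Ω) : Subgroup (GG G Ω) :=
  (stabZ G j).map (QuotientGroup.mk' (ZcapG G Ω))

/-- The connected component `K` of the identity in the stabilizer of `J`. -/
def KK {Ω : SymplecticForm m M} (j : CompatibleACS Ω) : Set (GG G Ω) :=
  @connectedComponentIn (GG G Ω) (topGG G Ω) (stabGG G j : Set (GG G Ω)) 1

/-- `φ_t = exp(tX)` is the flow of `X`. -/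
def IsFlow (X : VF m M) (φ : ℝ → Equiv.Perm M) : Prop :=
  φ 0 = 1 ∧ ContMDiff (𝓘(ℝ, ℝ).prod (𝓡 m)) (𝓡 m) ∞ (fun p : ℝ × M => φ p.1 p.2) ∧
  ∀ x : M, IsMIntegralCurve (fun t => φ t x) X

/-- The Lie algebra `𝔷` of `Z(G, H)`, realised by hamiltonian vector fields (equivalently, by their
potentials modulo constants, with the Poisson bracket): it is generated by
(and in fact equal to) the set of the hamiltonian vector fields `X` with `exp(tX) ∈ Z(G, H)` for
all `t`. -/
def zz (Ω : SymplecticForm m M) : LieSubalgebra ℝ (VF m M) :=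
  LieSubalgebra.lieSpan ℝ (VF m M)
    {X | IsHamiltonianVF Ω X ∧ ∃ φ : ℝ → Equiv.Perm M, IsFlow X φ ∧ ∀ t, φ t ∈ ZGH G Ω}

variable (k : ℕ) [TopologicalSpace G] [ChartedSpace (EuclideanSpace ℝ (Fin k)) G]

/-- The ideal `𝔤 ∩ 𝔷` of `𝔷`. (The set `𝔤 ∩ 𝔷` is a central ideal, hence equal to the ideal that it
generates.) -/
def gcapz (Ω : SymplecticForm m M) : LieIdeal ℝ (zz G Ω) :=
  LieSubmodule.lieSpan ℝ (zz G Ω) {X | (X : VF m M) ∈ fundamentalVF m k M G}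

/-- The Lie algebra `𝔷 / (𝔤 ∩ 𝔷)` of `𝒢`. -/
abbrev LieGG (Ω : SymplecticForm m M) : Type _ := zz G Ω ⧸ gcapz G k Ω

/-- The projection `𝔷 → 𝔷 / (𝔤 ∩ 𝔷)`. -/
abbrev proj (Ω : SymplecticForm m M) : zz G Ω → LieGG G k Ω := LieSubmodule.Quotient.mk

/-- The Lie algebra `𝔨` of `K`: it is generated by (and in fact equal to) the set of the
`ξ ∈ 𝔷 / (𝔤 ∩ 𝔷)` with `exp(tξ) ∈ K` for all `t`; here, if `ξ` is the class of `X`, then `exp(tξ)`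
is the class of `exp(tX)`. -/
def kk {Ω : SymplecticForm m M} (j : CompatibleACS Ω) : LieSubalgebra ℝ (LieGG G k Ω) :=
  LieSubalgebra.lieSpan ℝ (LieGG G k Ω)
    {ξ | ∃ X : zz G Ω, proj G k Ω X = ξ ∧ ∃ φ : ℝ → ZGH G Ω,
      IsFlow (X : VF m M) (fun t => φ t) ∧ ∀ t, (QuotientGroup.mk (φ t) : GG G Ω) ∈ KK G j}

end Groups

end HamAction

end

open HamAction

noncomputable section

namespace HamAction

section Derivations

variable {m : ℕ} {M : Type*} [TopologicalSpace M] [ChartedSpace (EuclideanSpace ℝ (Fin m)) M]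

/-- The derivative of a function along a vector field. -/
def VF.der [IsManifold (𝓡 m) ∞ M] (X : VF m M) (u : M → ℝ) : M → ℝ := fun x => dd u x (X x)

/-- Smooth real functions. -/
abbrev Smooth (u : M → ℝ) : Prop := ContMDiff (𝓡 m) 𝓘(ℝ, ℝ) ∞ u

theorem dd_add {u w : M → ℝ} {x : M} (hu : MDifferentiableAt (𝓡 m) 𝓘(ℝ, ℝ) u x)
    (hw : MDifferentiableAt (𝓡 m) 𝓘(ℝ, ℝ) w x) (v : TangentSpace (𝓡 m) x) :
    dd (fun y => u y + w y) x v = dd u x v + dd w x v := by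
  have := (hu.hasMFDerivAt.add hw.hasMFDerivAt).mfderiv
  exact congrArg (fun T => T v) this

theorem dd_mul {u w : M → ℝ} {x : M} (hu : MDifferentiableAt (𝓡 m) 𝓘(ℝ, ℝ) u x)
    (hw : MDifferentiableAt (𝓡 m) 𝓘(ℝ, ℝ) w x) (v : TangentSpace (𝓡 m) x) :
    dd (fun y => u y * w y) x v = u x * dd w x v + w x * dd u x v := by
  have := (hu.hasMFDerivAt.mul hw.hasMFDerivAt).mfderiv
  exact congrArg (fun T => T v) this

theorem dd_const (a : ℝ) (x : M) (v : TangentSpace (𝓡 m) x) :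
    dd (fun _ : M => a) x v = 0 := by
  have := (hasMFDerivAt_const (I := 𝓡 m) (I' := 𝓘(ℝ, ℝ)) a x).mfderiv
  exact congrArg (fun T => T v) this

theorem dd_const_mul {u : M → ℝ} {x : M} (a : ℝ) (hu : MDifferentiableAt (𝓡 m) 𝓘(ℝ, ℝ) u x)
    (v : TangentSpace (𝓡 m) x) : dd (fun y => a * u y) x v = a * dd u x v := by
  rw [dd_mul mdifferentiableAt_const hu, dd_const]
  ring

theorem dd_congr {u w : M → ℝ} {x : M} (h : ∀ᶠ y in nhds x, u y = w y)
    (v : TangentSpace (𝓡 m) x) : dd u x v = dd w x v := by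
  have : mfderiv (𝓡 m) 𝓘(ℝ, ℝ) u x = mfderiv (𝓡 m) 𝓘(ℝ, ℝ) w x :=
    Filter.EventuallyEq.mfderiv_eq h
  exact congrArg (fun T => T v) this

theorem dd_sum {ι : Type*} (s : Finset ι) {u : ι → M → ℝ} {x : M}
    (hu : ∀ i, MDifferentiableAt (𝓡 m) 𝓘(ℝ, ℝ) (u i) x) (v : TangentSpace (𝓡 m) x) :
    dd (fun y => ∑ i ∈ s, u i y) x v = ∑ i ∈ s, dd (u i) x v := by
  classical
  have key : MDifferentiableAt (𝓡 m) 𝓘(ℝ, ℝ) (fun y => ∑ i ∈ s, u i y) x ∧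
      dd (fun y => ∑ i ∈ s, u i y) x v = ∑ i ∈ s, dd (u i) x v := by
    induction s using Finset.induction_on with
    | empty => simpa using ⟨mdifferentiableAt_const, dd_const 0 x v⟩
    | insert i s hi ih =>
      simp only [Finset.sum_insert hi]
      exact ⟨(hu i).add ih.1, by rw [dd_add (hu i) ih.1, ih.2]⟩
  exact key.2

theorem Smooth.mdiff {u : M → ℝ} (hu : Smooth (m := m) u) (x : M) :
    MDifferentiableAt (𝓡 m) 𝓘(ℝ, ℝ) u x := hu.mdifferentiable (by simp) x

theorem dd_comp {u : M → ℝ} (hu : Smooth (m := m) u) {φ : M → M}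
    (hφ : ContMDiff (𝓡 m) (𝓡 m) ∞ φ) (x : M) (v : TangentSpace (𝓡 m) x) :
    dd (fun y => u (φ y)) x v = dd u (φ x) (mfderiv (𝓡 m) (𝓡 m) φ x v) := by
  have h := mfderiv_comp x (hu.mdiff (φ x)) (hφ.mdifferentiable (by simp) x)
  exact congrArg (fun T : EuclideanSpace ℝ (Fin m) →L[ℝ] ℝ => T v) h

variable [IsManifold (𝓡 m) ∞ M]

theorem VF.der_smooth (X : VF m M) {u : M → ℝ} (hu : Smooth (m := m) u) :
    Smooth (m := m) (X.der u) := by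
  have h1 : ContMDiff (𝓡 m).tangent 𝓘(ℝ, ℝ).tangent ∞ (tangentMap (𝓡 m) 𝓘(ℝ, ℝ) u) :=
    hu.contMDiff_tangentMap (by simp)
  have h2 := (contMDiff_snd_tangentBundle_modelSpace ℝ 𝓘(ℝ, ℝ) (n := ∞)).comp (h1.comp X.contMDiff)
  exact h2

theorem VF.zero_der (u : M → ℝ) (x : M) : VF.der (0 : VF m M) u x = 0 :=
  map_zero (mfderiv (𝓡 m) 𝓘(ℝ, ℝ) u x)

theorem VF.add_der (X Y : VF m M) (u : M → ℝ) (x : M) :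
    VF.der (X + Y) u x = X.der u x + Y.der u x :=
  map_add (mfderiv (𝓡 m) 𝓘(ℝ, ℝ) u x) (X x) (Y x)

theorem VF.smul_der (a : ℝ) (X : VF m M) (u : M → ℝ) (x : M) :
    VF.der (a • X) u x = a * X.der u x :=
  map_smul (mfderiv (𝓡 m) 𝓘(ℝ, ℝ) u x) a (X x)

theorem VF.der_mul (X : VF m M) {u w : M → ℝ} (hu : Smooth (m := m) u) (hw : Smooth (m := m) w)
    (x : M) : X.der (fun y => u y * w y) x = u x * X.der w x + w x * X.der u x :=
  dd_mul (hu.mdiff x) (hw.mdiff x) (X x)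

/-- A smooth vector field, read in the preferred chart at `x`. -/
def chartVF (X : VF m M) (x : M) : EuclideanSpace ℝ (Fin m) → EuclideanSpace ℝ (Fin m) :=
  mpullbackWithin 𝓘(ℝ, EuclideanSpace ℝ (Fin m)) (𝓡 m) (extChartAt (𝓡 m) x).symm X (range (𝓡 m))

theorem fderiv_comp_chart_symm {u : M → ℝ} (hu : Smooth (m := m) u) (X : VF m M) (x : M)
    {y : EuclideanSpace ℝ (Fin m)} (hy : y ∈ (extChartAt (𝓡 m) x).target) :
    fderiv ℝ (u ∘ (extChartAt (𝓡 m) x).symm) y (chartVF X x y) =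
      X.der u ((extChartAt (𝓡 m) x).symm y) := by
  have h1 : MDifferentiableWithinAt 𝓘(ℝ, EuclideanSpace ℝ (Fin m)) (𝓡 m)
    (extChartAt (𝓡 m) x).symm (range (𝓡 m)) y := mdifferentiableWithinAt_extChartAt_symm hy
  have hinv := isInvertible_mfderivWithin_extChartAt_symm (I := 𝓡 m) hy
  have hr : range (𝓡 m) = univ := by simp
  have h2 := mfderiv_comp y (hu.mdiff ((extChartAt (𝓡 m) x).symm y))
    (by rw [hr, mdifferentiableWithinAt_univ] at h1; exact h1)
  rw [mfderiv_eq_fderiv] at h2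
  rw [h2]
  have h3 : mfderivWithin 𝓘(ℝ, EuclideanSpace ℝ (Fin m)) (𝓡 m) (extChartAt (𝓡 m) x).symm
      (range (𝓡 m)) y = mfderiv 𝓘(ℝ, EuclideanSpace ℝ (Fin m)) (𝓡 m) (extChartAt (𝓡 m) x).symm y := by
    rw [hr, mfderivWithin_univ]
  have h4 : mfderiv 𝓘(ℝ, EuclideanSpace ℝ (Fin m)) (𝓡 m) (extChartAt (𝓡 m) x).symm y
      (chartVF X x y) = X ((extChartAt (𝓡 m) x).symm y) := by
    rw [← h3]
    exact hinv.self_apply_inverse _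
  exact congrArg _ h4

end Derivations

section Brackets

variable {m : ℕ} {M : Type*} [TopologicalSpace M] [ChartedSpace (EuclideanSpace ℝ (Fin m)) M]

theorem dd_eq_fderiv {u : M → ℝ} {x : M} (hu : MDifferentiableAt (𝓡 m) 𝓘(ℝ, ℝ) u x)
    (v : TangentSpace (𝓡 m) x) :
    dd u x v = fderiv ℝ (u ∘ (extChartAt (𝓡 m) x).symm) (extChartAt (𝓡 m) x x) v := by
  have h : mfderiv (𝓡 m) 𝓘(ℝ, ℝ) u x =
      fderiv ℝ (u ∘ (extChartAt (𝓡 m) x).symm) (extChartAt (𝓡 m) x x) := by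
    rw [hu.mfderiv]
    have hr : range (𝓡 m) = univ := by simp
    rw [hr, fderivWithin_univ]
    rfl
  exact congrArg (fun T : EuclideanSpace ℝ (Fin m) →L[ℝ] ℝ => T v) h

variable [IsManifold (𝓡 m) ∞ M]

theorem contDiffAt_comp_chart_symm {u : M → ℝ} (hu : Smooth (m := m) u) (x : M)
    {y : EuclideanSpace ℝ (Fin m)} (hy : y ∈ (extChartAt (𝓡 m) x).target) :
    ContDiffAt ℝ ∞ (u ∘ (extChartAt (𝓡 m) x).symm) y := by
  rw [← contMDiffAt_iff_contDiffAt]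
  have h := contMDiffWithinAt_extChartAt_symm_range (I := 𝓡 m) (n := ∞) x hy
  have hr : range (𝓡 m) = univ := by simp
  rw [hr, contMDiffWithinAt_univ] at h
  exact hu.contMDiffAt.comp y h

theorem chartVF_self (X : VF m M) (x : M) : chartVF X x (extChartAt (𝓡 m) x x) = X x := by
  have h := mfderivWithin_extChartAt_symm_inverse_apply (I := 𝓡 m) (x := x)
    (X ((extChartAt (𝓡 m) x).symm (extChartAt (𝓡 m) x x)))
  have h2 : ((X ((extChartAt (𝓡 m) x).symm (extChartAt (𝓡 m) x x))) :
    EuclideanSpace ℝ (Fin m)) = X x := by rw [extChartAt_to_inv]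
  exact Eq.trans h h2

theorem differentiableAt_chartVF (X : VF m M) (x : M) :
    DifferentiableAt ℝ (chartVF X x) (extChartAt (𝓡 m) x x) := by
  have h := MDifferentiableWithinAt.differentiableWithinAt_mpullbackWithin_vectorField (I := 𝓡 m)
    (s := univ) (X.mdiff x).mdifferentiableWithinAt
  have hr : range (𝓡 m) = univ := by simp
  have h' : DifferentiableWithinAt ℝ (chartVF X x)
      ((extChartAt (𝓡 m) x).symm ⁻¹' univ ∩ range (𝓡 m)) (extChartAt (𝓡 m) x x) := h
  rwa [hr, preimage_univ, univ_inter, differentiableWithinAt_univ] at h'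

theorem bracket_eq_chart (X Y : VF m M) (x : M) :
    ⁅X, Y⁆ x = lieBracket ℝ (chartVF X x) (chartVF Y x) (extChartAt (𝓡 m) x x) := by
  rw [VF.bracket_apply, mlieBracket, mlieBracketWithin_apply, mfderiv_extChartAt_self]
  have hr : range (𝓡 m) = univ := by simp
  have h : ∀ w : EuclideanSpace ℝ (Fin m),
    (ContinuousLinearMap.id ℝ (EuclideanSpace ℝ (Fin m))).inverse w = w := by
      intro w; simp
  refine (h _).trans ?_
  change lieBracketWithin ℝ (chartVF X x) (chartVF Y x)
    ((extChartAt (𝓡 m) x).symm ⁻¹' univ ∩ range (𝓡 m)) _ = _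
  rw [hr, preimage_univ, univ_inter, lieBracketWithin_univ]

theorem der_der_eq_chart (X Y : VF m M) {u : M → ℝ} (hu : Smooth (m := m) u) (x : M) :
    X.der (Y.der u) x =
      fderiv ℝ (fderiv ℝ (u ∘ (extChartAt (𝓡 m) x).symm)) (extChartAt (𝓡 m) x x)
        (chartVF X x (extChartAt (𝓡 m) x x)) (chartVF Y x (extChartAt (𝓡 m) x x)) +
      fderiv ℝ (u ∘ (extChartAt (𝓡 m) x).symm) (extChartAt (𝓡 m) x x)
        (fderiv ℝ (chartVF Y x) (extChartAt (𝓡 m) x x) (chartVF X x (extChartAt (𝓡 m) x x))) := by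
  have h1 : X.der (Y.der u) x = fderiv ℝ (Y.der u ∘ (extChartAt (𝓡 m) x).symm)
      (extChartAt (𝓡 m) x x) (chartVF X x (extChartAt (𝓡 m) x x)) := by
    rw [chartVF_self]
    exact dd_eq_fderiv ((Y.der_smooth hu).mdiff x) (X x)
  have h2 : (Y.der u ∘ (extChartAt (𝓡 m) x).symm) =ᶠ[nhds (extChartAt (𝓡 m) x x)]
      fun y => fderiv ℝ (u ∘ (extChartAt (𝓡 m) x).symm) y (chartVF Y x y) := by
    filter_upwards [(isOpen_extChartAt_target (I := 𝓡 m) x).mem_nhds (mem_extChartAt_target x)] with y hy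
    exact (fderiv_comp_chart_symm hu Y x hy).symm
  have h3 : DifferentiableAt ℝ (fderiv ℝ (u ∘ (extChartAt (𝓡 m) x).symm)) (extChartAt (𝓡 m) x x) :=
    ((contDiffAt_comp_chart_symm hu x (mem_extChartAt_target x)).fderiv_right
      (m := 1) (by rw [one_add_one_eq_two]; exact ENat.LEInfty.out)).differentiableAt one_ne_zero
  rw [h1, h2.fderiv_eq, fderiv_clm_apply h3 (differentiableAt_chartVF Y x)]
  simp [add_comm]

theorem bracket_der (X Y : VF m M) {u : M → ℝ} (hu : Smooth (m := m) u) (x : M) :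
    VF.der ⁅X, Y⁆ u x = X.der (Y.der u) x - Y.der (X.der u) x := by
  have hs : IsSymmSndFDerivAt ℝ (u ∘ (extChartAt (𝓡 m) x).symm) (extChartAt (𝓡 m) x x) :=
    (contDiffAt_comp_chart_symm hu x (mem_extChartAt_target x)).isSymmSndFDerivAt
      (by simp only [minSmoothness_of_isRCLikeNormedField]; exact ENat.LEInfty.out)
  rw [der_der_eq_chart X Y hu, der_der_eq_chart Y X hu, hs.eq]
  have h1 := dd_eq_fderiv (hu.mdiff x) (⁅X, Y⁆ x)
  refine Eq.trans h1 ?_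
  rw [bracket_eq_chart, lieBracket, map_sub]
  ring

end Brackets

section Frame

variable {m : ℕ} {M : Type*} [TopologicalSpace M] [ChartedSpace (EuclideanSpace ℝ (Fin m)) M]
  [IsManifold (𝓡 m) ∞ M] [T2Space M]

theorem exists_coordinate_frame (p : M) :
    ∃ (u : Fin m → M → ℝ) (e : Fin m → VF m M), (∀ i, Smooth (m := m) (u i)) ∧
      ∀ᶠ q in nhds p, q ∈ (chartAt (EuclideanSpace ℝ (Fin m)) p).source ∧
        (∀ i, e i q = mfderiv (𝓡 m) (𝓡 m) (chartAt (EuclideanSpace ℝ (Fin m)) p).symm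
          (chartAt (EuclideanSpace ℝ (Fin m)) p q) (EuclideanSpace.single i (1 : ℝ))) ∧
        ∀ v : TangentSpace (𝓡 m) q, v = ∑ i, dd (u i) q v • e i q := by
  obtain ⟨χ⟩ : Nonempty (SmoothBumpFunction (𝓡 m) p) := inferInstance
  set c := chartAt (EuclideanSpace ℝ (Fin m)) p with hc
  let t := trivializationAt (EuclideanSpace ℝ (Fin m)) (TangentSpace (𝓡 m) : M → Type _) p
  have hcs : ContMDiffOn (𝓡 m) 𝓘(ℝ, EuclideanSpace ℝ (Fin m)) ∞ c c.source := contMDiffOn_chart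
  have hbase : t.baseSet = c.source := rfl
  have he : ∀ i, ContMDiff (𝓡 m) (𝓡 m).tangent ∞ (fun q => (⟨q, (χ : M → ℝ) q •
      t.symm q (EuclideanSpace.single i (1 : ℝ))⟩ : TangentBundle (𝓡 m) M)) := by
    intro i
    refine ContMDiffOn.smul_section_of_tsupport (u := c.source) χ.contMDiff.contMDiffOn c.open_source
      χ.tsupport_subset_chartAt_source ?_
    intro q hq
    rw [t.contMDiffWithinAt_section _ (by rwa [hbase])]
    exact (contMDiffWithinAt_const (c := EuclideanSpace.single i (1 : ℝ))).congr_of_mem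
      (fun x hx => congrArg Prod.snd
        (t.apply_mk_symm (b := x) (by rwa [hbase]) (EuclideanSpace.single i (1 : ℝ)))) hq
  have hu : ∀ i, Smooth (m := m) (fun q => (χ : M → ℝ) q • c q i) := by
    intro i
    refine χ.contMDiff_smul ?_
    exact (EuclideanSpace.proj i : EuclideanSpace ℝ (Fin m) →L[ℝ] ℝ).contMDiff.comp_contMDiffOn hcs
  refine ⟨fun i q => (χ : M → ℝ) q • c q i, fun i => ⟨_, he i⟩, hu, ?_⟩
  have hχ : ∀ᶠ q in nhds p, ∀ᶠ y in nhds q, (χ : M → ℝ) y = 1 := χ.eventuallyEq_one.eventuallyEq_nhds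
  filter_upwards [hχ, c.open_source.mem_nhds (mem_chart_source _ p)] with q hq1 hqs
  have hd : MDifferentiableAt (𝓡 m) (𝓡 m) c q := (mdifferentiable_chart p).mdifferentiableAt hqs
  have he' : ∀ w : EuclideanSpace ℝ (Fin m), t.symm q w =
      mfderiv (𝓡 m) (𝓡 m) c.symm (c q) w := by
    intro w
    have h := TangentBundle.symmL_trivializationAt (I := 𝓡 m) hqs
    have hr : range (𝓡 m) = univ := by simp
    rw [hr, mfderivWithin_univ] at h
    have hext : ((extChartAt (𝓡 m) p).symm : EuclideanSpace ℝ (Fin m) → M) = c.symm := rfl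
    rw [hext] at h
    refine (Trivialization.symmL_apply (R := ℝ) t (b := q) (by rwa [hbase]) w).symm.trans ?_
    exact congrArg (fun T : EuclideanSpace ℝ (Fin m) →L[ℝ] EuclideanSpace ℝ (Fin m) => T w) h
  have hE : ∀ i, ((χ : M → ℝ) q • t.symm q (EuclideanSpace.single i (1 : ℝ)) : TangentSpace (𝓡 m) q)
      = mfderiv (𝓡 m) (𝓡 m) c.symm (c q) (EuclideanSpace.single i (1 : ℝ)) := by
    intro i
    rw [hq1.self_of_nhds, one_smul]
    exact he' _
  refine ⟨hqs, hE, fun v => ?_⟩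
  let Dc : EuclideanSpace ℝ (Fin m) →L[ℝ] EuclideanSpace ℝ (Fin m) := mfderiv (𝓡 m) (𝓡 m) c q
  have hdu : ∀ i, dd (fun q => (χ : M → ℝ) q • c q i) q v =
      Dc v i := by
    intro i
    rw [dd_congr (w := (EuclideanSpace.proj i : EuclideanSpace ℝ (Fin m) →L[ℝ] ℝ) ∘ c)
      (by filter_upwards [hq1] with y hy; simp [hy])]
    have := mfderiv_comp q (EuclideanSpace.proj i : EuclideanSpace ℝ (Fin m) →L[ℝ] ℝ).mdifferentiableAt hd
    rw [ContinuousLinearMap.mfderiv_eq] at this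
    exact congrArg (fun T : EuclideanSpace ℝ (Fin m) →L[ℝ] ℝ => T v) this
  have hinv : mfderiv (𝓡 m) (𝓡 m) c.symm (c q) (mfderiv (𝓡 m) (𝓡 m) c q v) = v :=
    congrArg (fun T : EuclideanSpace ℝ (Fin m) →L[ℝ] EuclideanSpace ℝ (Fin m) => T v)
      ((mdifferentiable_chart p).symm_comp_deriv hqs)
  have hsum : Dc v =
      ∑ i, Dc v i •
        EuclideanSpace.single i (1 : ℝ) := by
    ext j
    simp [Finset.sum_apply, Pi.single_apply]
  let D : EuclideanSpace ℝ (Fin m) →L[ℝ] EuclideanSpace ℝ (Fin m) :=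
    mfderiv (𝓡 m) (𝓡 m) c.symm (c q)
  have hfin : (v : EuclideanSpace ℝ (Fin m)) =
      ∑ i, Dc v i •
        D (EuclideanSpace.single i (1 : ℝ)) := by
    have h2 := congrArg D hsum
    rw [map_sum] at h2
    simp only [map_smul] at h2
    exact hinv.symm.trans h2
  refine Eq.trans hfin (Finset.sum_congr rfl fun i _ => ?_)
  rw [hdu i]
  exact congrArg _ (hE i).symm

theorem exists_VF_apply_eq (x : M) (v : TangentSpace (𝓡 m) x) : ∃ Z : VF m M, Z x = v := by
  obtain ⟨u, e, -, h⟩ := exists_coordinate_frame (m := m) x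
  refine ⟨∑ i, dd (u i) x v • e i, ?_⟩
  refine Eq.trans ?_ (h.self_of_nhds.2.2 v).symm
  have : ∀ s : Finset (Fin m), (∑ i ∈ s, dd (u i) x v • e i : VF m M) x =
      ∑ i ∈ s, dd (u i) x v • e i x := by
    intro s
    classical
    induction s using Finset.induction_on with
    | empty => simp
    | insert i s hi ih => simp [Finset.sum_insert hi, ← ih]
  exact this _

end Frame

theorem hasDerivAt_fderiv_snd {E : Type*} [NormedAddCommGroup E] [NormedSpace ℝ E]
    {F : ℝ × E → ℝ} {t₀ : ℝ} {y₀ : E} (hF : ContDiffAt ℝ ∞ F (t₀, y₀)) (w : E) :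
    HasDerivAt (fun t => fderiv ℝ F (t, y₀) (0, w))
      (fderiv ℝ (fun y => fderiv ℝ F (t₀, y) (1, 0)) y₀ w) t₀ := by
  have hD : DifferentiableAt ℝ (fderiv ℝ F) (t₀, y₀) :=
    (hF.fderiv_right
      (m := 1) (by rw [one_add_one_eq_two]; exact ENat.LEInfty.out)).differentiableAt one_ne_zero
  have hs : IsSymmSndFDerivAt ℝ F (t₀, y₀) :=
    hF.isSymmSndFDerivAt
      (by simp only [minSmoothness_of_isRCLikeNormedField]; exact ENat.LEInfty.out)
  have e2 : fderiv ℝ (fun y => fderiv ℝ F (t₀, y) (1, 0)) y₀ w =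
      fderiv ℝ (fderiv ℝ F) (t₀, y₀) (0, w) (1, 0) := by
    have h2 : HasFDerivAt (fun z : E => (t₀, z)) (ContinuousLinearMap.inr ℝ ℝ _) y₀ :=
      hasFDerivAt_prodMk_right t₀ y₀
    have h3 : HasFDerivAt (fun y => fderiv ℝ F (t₀, y))
        ((fderiv ℝ (fderiv ℝ F) (t₀, y₀)).comp (ContinuousLinearMap.inr ℝ ℝ E)) y₀ :=
      hD.hasFDerivAt.comp y₀ h2
    have h4 := h3.clm_apply (hasFDerivAt_const ((1 : ℝ), (0 : E)) y₀)
    rw [h4.fderiv]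
    simp
  rw [e2, hs.eq]
  have h2 : HasDerivAt (fun s : ℝ => (s, y₀)) (1, 0) t₀ :=
    (hasDerivAt_id t₀).prodMk (hasDerivAt_const t₀ y₀)
  have h3 : HasDerivAt (fun t => fderiv ℝ F (t, y₀)) (fderiv ℝ (fderiv ℝ F) (t₀, y₀) (1, 0)) t₀ :=
    hD.hasFDerivAt.comp_hasDerivAt t₀ h2
  have h4 := h3.clm_apply (hasDerivAt_const t₀ ((0 : ℝ), w))
  rwa [map_zero, add_zero] at h4

section Flows

variable {m : ℕ} {M : Type*} [TopologicalSpace M] [ChartedSpace (EuclideanSpace ℝ (Fin m)) M]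
  [IsManifold (𝓡 m) ∞ M]

/-- Symmetry of mixed partial derivatives for a function on `ℝ × M`. -/
theorem hasDerivAt_dd {f : ℝ → M → ℝ}
    (hf : ContMDiff (𝓘(ℝ, ℝ).prod (𝓡 m)) 𝓘(ℝ, ℝ) ∞ (fun p : ℝ × M => f p.1 p.2))
    {g : M → ℝ} {t₀ : ℝ} (hg : Smooth (m := m) g)
    (h : ∀ y, HasDerivAt (fun t => f t y) (g y) t₀) (x : M) (v : TangentSpace (𝓡 m) x) :
    HasDerivAt (fun t => dd (f t) x v) (dd g x v) t₀ := by
  set c := extChartAt (𝓡 m) x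
  let F : ℝ × EuclideanSpace ℝ (Fin m) → ℝ := fun p => f p.1 (c.symm p.2)
  have hF : ∀ t, ∀ y ∈ c.target, ContDiffAt ℝ ∞ F (t, y) := by
    intro t y hy
    rw [← contMDiffAt_iff_contDiffAt]
    have h1 := contMDiffWithinAt_extChartAt_symm_range (I := 𝓡 m) (n := ∞) x hy
    have hr : range (𝓡 m) = univ := by simp
    rw [hr, contMDiffWithinAt_univ] at h1
    have h2 : ContMDiffAt (𝓘(ℝ, ℝ).prod 𝓘(ℝ, EuclideanSpace ℝ (Fin m))) (𝓘(ℝ, ℝ).prod (𝓡 m)) ∞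
        (fun p : ℝ × EuclideanSpace ℝ (Fin m) => (p.1, c.symm p.2)) (t, y) :=
      contMDiffAt_fst.prodMk (ContMDiffAt.comp (t, y) (g := c.symm) (f := Prod.snd) h1 contMDiffAt_snd)
    rw [modelWithCornersSelf_prod, ← chartedSpaceSelf_prod]
    exact hf.contMDiffAt.comp (t, y) h2
  have hx : c x ∈ c.target := mem_extChartAt_target x
  have hft : ∀ t, Smooth (m := m) (f t) := fun t =>
    hf.comp (contMDiff_const.prodMk contMDiff_id)
  have hsnd : ∀ t, ∀ y ∈ c.target, ∀ w, fderiv ℝ (fun z => F (t, z)) y w = fderiv ℝ F (t, y) (0, w) := by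
    intro t y hy w
    have h1 : HasFDerivAt (fun z : EuclideanSpace ℝ (Fin m) => (t, z)) (ContinuousLinearMap.inr ℝ ℝ _) y :=
      hasFDerivAt_prodMk_right t y
    have h2 := ((hF t y hy).differentiableAt (by simp)).hasFDerivAt.comp y h1
    exact congrArg (fun T : EuclideanSpace ℝ (Fin m) →L[ℝ] ℝ => T w) h2.fderiv
  have hfst : ∀ y ∈ c.target, g (c.symm y) = fderiv ℝ F (t₀, y) (1, 0) := by
    intro y hy
    have h1 : HasFDerivAt (fun s : ℝ => (s, y)) (ContinuousLinearMap.inl ℝ ℝ _) t₀ :=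
      hasFDerivAt_prodMk_left t₀ y
    have h2 := ((hF t₀ y hy).differentiableAt (by simp)).hasFDerivAt.comp t₀ h1
    exact (h (c.symm y)).unique h2.hasDerivAt
  have e1 : (fun t => dd (f t) x v) = fun t => fderiv ℝ F (t, c x) (0, v) := by
    funext t
    rw [dd_eq_fderiv ((hft t).mdiff x)]
    exact hsnd t _ hx v
  have e2 : dd g x v = fderiv ℝ (fun y => fderiv ℝ F (t₀, y) (1, 0)) (c x) v := by
    rw [dd_eq_fderiv (hg.mdiff x)]
    have h1 : (g ∘ c.symm) =ᶠ[nhds (c x)] fun y => fderiv ℝ F (t₀, y) (1, 0) := by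
      filter_upwards [(isOpen_extChartAt_target (I := 𝓡 m) x).mem_nhds hx] with y hy
      exact hfst y hy
    rw [h1.fderiv_eq]
  rw [e1, e2]
  exact hasDerivAt_fderiv_snd (hF t₀ _ hx) v

theorem IsFlow.contMDiff {X : VF m M} {φ : ℝ → Equiv.Perm M} (hφ : IsFlow X φ) (t : ℝ) :
    ContMDiff (𝓡 m) (𝓡 m) ∞ (φ t) :=
  hφ.2.1.comp (contMDiff_const.prodMk contMDiff_id)

theorem IsFlow.hasDerivAt {X : VF m M} {φ : ℝ → Equiv.Perm M} (hφ : IsFlow X φ)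
    {u : M → ℝ} (hu : Smooth (m := m) u) (x : M) (t : ℝ) :
    HasDerivAt (fun s => u (φ s x)) (X.der u (φ t x)) t := by
  let T : EuclideanSpace ℝ (Fin m) →L[ℝ] ℝ := mfderiv (𝓡 m) 𝓘(ℝ, ℝ) u (φ t x)
  let w : EuclideanSpace ℝ (Fin m) := X (φ t x)
  have h : HasFDerivAt (fun s => u (φ s x)) (T.comp ((1 : ℝ →L[ℝ] ℝ).smulRight w)) t :=
    ((hu.mdiff (φ t x)).hasMFDerivAt.comp t (hφ.2.2 x t)).hasFDerivAt
  refine h.hasDerivAt.congr_deriv ?_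
  have : T ((1 : ℝ) • w) = T w := by rw [one_smul]
  exact this

theorem IsFlow.hasDerivAt_dd {X : VF m M} {φ : ℝ → Equiv.Perm M} (hφ : IsFlow X φ)
    {u : M → ℝ} (hu : Smooth (m := m) u) (x : M) (v : TangentSpace (𝓡 m) x) (t : ℝ) :
    HasDerivAt (fun s => dd u (φ s x) (mfderiv (𝓡 m) (𝓡 m) (φ s) x v))
      (dd (X.der u) (φ t x) (mfderiv (𝓡 m) (𝓡 m) (φ t) x v)) t := by
  have h := HamAction.hasDerivAt_dd (f := fun s y => u (φ s y)) (hu.comp hφ.2.1)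
    (g := fun y => X.der u (φ t y)) ((X.der_smooth hu).comp (hφ.contMDiff t))
    (fun y => hφ.hasDerivAt hu y t) x v
  rw [dd_comp (X.der_smooth hu) (hφ.contMDiff t)] at h
  refine h.congr_of_eventuallyEq (Filter.Eventually.of_forall fun s => ?_)
  exact (dd_comp hu (hφ.contMDiff s) x v).symm

end Flows

section LieDerivative

variable {m : ℕ} {M : Type*} [TopologicalSpace M] [ChartedSpace (EuclideanSpace ℝ (Fin m)) M]
  [IsManifold (𝓡 m) ∞ M]

variable (m M) in
/-- Fields of bilinear forms on the tangent spaces that are smooth when evaluated on smooth vector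
fields. -/
structure SmoothBilin where
  form : ∀ x : M, TangentSpace (𝓡 m) x →ₗ[ℝ] TangentSpace (𝓡 m) x →ₗ[ℝ] ℝ
  smooth : ∀ Y Z : VF m M, Smooth (m := m) (fun y => form y (Y y) (Z y))

/-- The Lie derivative `(L_X B)(Y, Z)`. -/
def SmoothBilin.lieD (B : SmoothBilin m M) (X Y Z : VF m M) (x : M) : ℝ :=
  dd (fun y => B.form y (Y y) (Z y)) x (X x) - B.form x (⁅X, Y⁆ x) (Z x) - B.form x (Y x) (⁅X, Z⁆ x)

theorem bilin_expand {V : Type*} [AddCommGroup V] [Module ℝ V] (b : V →ₗ[ℝ] V →ₗ[ℝ] ℝ)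
    {e : Fin m → V} {v w : V} {a c : Fin m → ℝ} (hv : v = ∑ i, a i • e i)
    (hw : w = ∑ i, c i • e i) : b v w = ∑ i, ∑ j, b (e i) (e j) * a i * c j := by
  rw [hv, hw]
  simp only [map_sum, map_smul, LinearMap.sum_apply, LinearMap.smul_apply, smul_eq_mul]
  rw [Finset.sum_comm]
  refine Finset.sum_congr rfl fun i _ => ?_
  rw [Finset.mul_sum]
  refine Finset.sum_congr rfl fun j _ => ?_
  ring

theorem SmoothBilin.lieD_eq_frame (B : SmoothBilin m M) (X Y Z : VF m M) {p : M}
    {u : Fin m → M → ℝ} {e : Fin m → VF m M} (hu : ∀ i, Smooth (m := m) (u i))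
    (h : ∀ᶠ q in nhds p, ∀ v : TangentSpace (𝓡 m) q, v = ∑ i, dd (u i) q v • e i q) :
    B.lieD X Y Z p = ∑ i, ∑ j,
      (X.der (fun y => B.form y (e i y) (e j y)) p * dd (u i) p (Y p) * dd (u j) p (Z p) +
        B.form p (e i p) (e j p) * dd (X.der (u i)) p (Y p) * dd (u j) p (Z p) +
        B.form p (e i p) (e j p) * dd (u i) p (Y p) * dd (X.der (u j)) p (Z p)) := by
  have h1 : ∀ᶠ q in nhds p, B.form q (Y q) (Z q) =
      ∑ i, ∑ j, B.form q (e i q) (e j q) * Y.der (u i) q * Z.der (u j) q := by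
    filter_upwards [h] with q hq
    exact bilin_expand (B.form q) (hq (Y q)) (hq (Z q))
  have hc : ∀ i j, MDifferentiableAt (𝓡 m) 𝓘(ℝ, ℝ) (fun y => B.form y (e i y) (e j y)) p :=
    fun i j => (B.smooth (e i) (e j)).mdiff p
  have hY : ∀ i, MDifferentiableAt (𝓡 m) 𝓘(ℝ, ℝ) (Y.der (u i)) p :=
    fun i => (Y.der_smooth (hu i)).mdiff p
  have hZ : ∀ i, MDifferentiableAt (𝓡 m) 𝓘(ℝ, ℝ) (Z.der (u i)) p :=
    fun i => (Z.der_smooth (hu i)).mdiff p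
  have hcY : ∀ i j, MDifferentiableAt (𝓡 m) 𝓘(ℝ, ℝ)
      (fun y => B.form y (e i y) (e j y) * Y.der (u i) y) p := fun i j => (hc i j).mul (hY i)
  have hcYZ : ∀ i j, MDifferentiableAt (𝓡 m) 𝓘(ℝ, ℝ)
      (fun y => B.form y (e i y) (e j y) * Y.der (u i) y * Z.der (u j) y) p :=
    fun i j => (hcY i j).mul (hZ j)
  have hsum : ∀ i, MDifferentiableAt (𝓡 m) 𝓘(ℝ, ℝ)
      (fun y => ∑ j, B.form y (e i y) (e j y) * Y.der (u i) y * Z.der (u j) y) p := by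
    intro i
    have : ContMDiff (𝓡 m) 𝓘(ℝ, ℝ) ∞
        (fun y => ∑ j, B.form y (e i y) (e j y) * Y.der (u i) y * Z.der (u j) y) :=
      contMDiff_finsetSum fun j _ => ((B.smooth (e i) (e j)).mul (Y.der_smooth (hu i))).mul
        (Z.der_smooth (hu j))
    exact Smooth.mdiff this p
  unfold SmoothBilin.lieD
  rw [dd_congr h1, dd_sum _ hsum,
    bilin_expand (B.form p) (h.self_of_nhds (⁅X, Y⁆ p)) (h.self_of_nhds (Z p)),
    bilin_expand (B.form p) (h.self_of_nhds (Y p)) (h.self_of_nhds (⁅X, Z⁆ p)),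
    ← Finset.sum_sub_distrib, ← Finset.sum_sub_distrib]
  refine Finset.sum_congr rfl fun i _ => ?_
  rw [dd_sum _ (hcYZ i), ← Finset.sum_sub_distrib, ← Finset.sum_sub_distrib]
  refine Finset.sum_congr rfl fun j _ => ?_
  rw [dd_mul (hcY i j) (hZ j), dd_mul (hc i j) (hY i)]
  have e1 := bracket_der X Y (hu i) p
  have e2 := bracket_der X Z (hu j) p
  simp only [VF.der] at e1 e2 ⊢
  rw [e1, e2]
  ring

variable [T2Space M]

theorem IsFlow.hasDerivAt_bilin {X : VF m M} {φ : ℝ → Equiv.Perm M} (hφ : IsFlow X φ)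
    (B : SmoothBilin m M) (x : M) (v w : TangentSpace (𝓡 m) x) (t : ℝ) (Y Z : VF m M)
    (hY : Y (φ t x) = mfderiv (𝓡 m) (𝓡 m) (φ t) x v)
    (hZ : Z (φ t x) = mfderiv (𝓡 m) (𝓡 m) (φ t) x w) :
    HasDerivAt (fun s => B.form (φ s x) (mfderiv (𝓡 m) (𝓡 m) (φ s) x v)
      (mfderiv (𝓡 m) (𝓡 m) (φ s) x w)) (B.lieD X Y Z (φ t x)) t := by
  obtain ⟨u, e, hu, hfr⟩ := exists_coordinate_frame (m := m) (φ t x)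
  have h : ∀ᶠ q in nhds (φ t x), ∀ v : TangentSpace (𝓡 m) q, v = ∑ i, dd (u i) q v • e i q :=
    hfr.mono fun q hq => hq.2.2
  have hcont : ContinuousAt (fun s => φ s x) t := (hφ.2.2 x t).continuousAt
  have h1 : (fun s => B.form (φ s x) (mfderiv (𝓡 m) (𝓡 m) (φ s) x v)
      (mfderiv (𝓡 m) (𝓡 m) (φ s) x w)) =ᶠ[nhds t] fun s => ∑ i, ∑ j,
      B.form (φ s x) (e i (φ s x)) (e j (φ s x)) *
        dd (u i) (φ s x) (mfderiv (𝓡 m) (𝓡 m) (φ s) x v) *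
        dd (u j) (φ s x) (mfderiv (𝓡 m) (𝓡 m) (φ s) x w) := by
    filter_upwards [hcont.eventually h] with s hs
    exact bilin_expand (B.form (φ s x)) (hs _) (hs _)
  rw [B.lieD_eq_frame X Y Z hu h]
  refine HasDerivAt.congr_of_eventuallyEq ?_ h1
  refine HasDerivAt.fun_sum fun i _ => HasDerivAt.fun_sum fun j _ => ?_
  have hd := ((hφ.hasDerivAt (B.smooth (e i) (e j)) x t).mul (hφ.hasDerivAt_dd (hu i) x v t)).mul
    (hφ.hasDerivAt_dd (hu j) x w t)
  refine hd.congr_deriv ?_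
  rw [hY, hZ]
  simp only [Pi.mul_apply]
  ring

end LieDerivative

section Symplectic

variable {m : ℕ} {M : Type*} [TopologicalSpace M] [ChartedSpace (EuclideanSpace ℝ (Fin m)) M]
  [IsManifold (𝓡 m) ∞ M]

theorem SymplecticForm.antisymm (Ω : SymplecticForm m M) (x : M) (v w : TangentSpace (𝓡 m) x) :
    Ω.form x v w = - Ω.form x w v := by
  have h := Ω.alternating x (v + w)
  simp only [map_add, add_apply, Ω.alternating] at h
  linarith

theorem SymplecticForm.smooth_apply (Ω : SymplecticForm m M) (Y Z : VF m M) :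
    Smooth (m := m) (fun y => Ω.form y (Y y) (Z y)) := by
  intro x
  have h := ContMDiffAt.clm_bundle_apply₂ (F₁ := EuclideanSpace ℝ (Fin m))
    (F₂ := EuclideanSpace ℝ (Fin m)) (F₃ := ℝ) (E₃ := Bundle.Trivial M ℝ)
    Ω.smooth.contMDiffAt (Y.contMDiff x) (Z.contMDiff x)
  simpa using! (contMDiffAt_section _).1 h

/-- A symplectic form as a field of bilinear forms. -/
def SymplecticForm.toBilin (Ω : SymplecticForm m M) : SmoothBilin m M where
  form x := LinearMap.mk₂ ℝ (fun v w => Ω.form x v w) (by simp) (by simp) (by simp) (by simp)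
  smooth := Ω.smooth_apply

/-- The metric of a compatible almost complex structure as a field of bilinear forms. -/
def CompatibleACS.toBilin {Ω : SymplecticForm m M} (j : CompatibleACS Ω) : SmoothBilin m M where
  form x := LinearMap.mk₂ ℝ (fun v w => Ω.form x v (j.J x w)) (by simp) (by simp) (by simp) (by simp)
  smooth Y Z := Ω.smooth_apply Y (j.apply Z)

/-- Hamiltonian vector fields preserve the symplectic form. -/
theorem IsHamiltonianVF.lieD_eq_zero {Ω : SymplecticForm m M} {X : VF m M}
    (hX : IsHamiltonianVF Ω X) (Y Z : VF m M) (x : M) : Ω.toBilin.lieD X Y Z x = 0 := by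
  obtain ⟨f, hf, hfX⟩ := hX
  have hc := Ω.closed X Y Z x
  have e1 : (fun y => Ω.form y (X y) (Z y)) = Z.der f := funext fun y => hfX y _
  have e2 : (fun y => Ω.form y (X y) (Y y)) = Y.der f := funext fun y => hfX y _
  have e3 : Ω.form x (X x) (⁅Y, Z⁆ x) = Y.der (Z.der f) x - Z.der (Y.der f) x :=
    (hfX x _).trans (bracket_der Y Z hf x)
  rw [e1, e2, Ω.antisymm x (⁅Y, Z⁆ x) (X x), e3, Ω.antisymm x (⁅X, Z⁆ x) (Y x)] at hc
  change dd (fun y => Ω.form y (Y y) (Z y)) x (X x) - Ω.form x (⁅X, Y⁆ x) (Z x)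
    - Ω.form x (Y x) (⁅X, Z⁆ x) = 0
  simp only [VF.der] at hc
  linarith

theorem IsPotential.bracket [T2Space M] {Ω : SymplecticForm m M} {X Y : VF m M}
    (hX : IsHamiltonianVF Ω X) {h : M → ℝ} (hY : IsPotential Ω h Y) :
    IsPotential Ω (X.der h) ⁅X, Y⁆ := by
  refine ⟨X.der_smooth hY.1, fun x v => ?_⟩
  obtain ⟨Z, rfl⟩ := exists_VF_apply_eq x v
  have h1 := hX.lieD_eq_zero Y Z x
  change dd (fun y => Ω.form y (Y y) (Z y)) x (X x) - Ω.form x (⁅X, Y⁆ x) (Z x)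
    - Ω.form x (Y x) (⁅X, Z⁆ x) = 0 at h1
  have e1 : (fun y => Ω.form y (Y y) (Z y)) = Z.der h := funext fun y => hY.2 y _
  have e3 : Ω.form x (Y x) (⁅X, Z⁆ x) = X.der (Z.der h) x - Z.der (X.der h) x :=
    (hY.2 x _).trans (bracket_der X Z hY.1 x)
  rw [e1, e3] at h1
  simp only [VF.der] at h1 ⊢
  linarith

theorem IsPotential.add {Ω : SymplecticForm m M} {X Y : VF m M} {f h : M → ℝ}
    (hX : IsPotential Ω f X) (hY : IsPotential Ω h Y) :
    IsPotential Ω (fun x => f x + h x) (X + Y) := by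
  refine ⟨hX.1.add hY.1, fun x v => ?_⟩
  rw [dd_add (Smooth.mdiff hX.1 x) (Smooth.mdiff hY.1 x), ← hX.2, ← hY.2]
  simp

theorem IsPotential.smul {Ω : SymplecticForm m M} {X : VF m M} {f : M → ℝ} (a : ℝ)
    (hX : IsPotential Ω f X) : IsPotential Ω (fun x => a * f x) (a • X) := by
  refine ⟨contMDiff_const.mul hX.1, fun x v => ?_⟩
  rw [dd_const_mul a (Smooth.mdiff hX.1 x), ← hX.2]
  simp

theorem IsPotential.zero (Ω : SymplecticForm m M) : IsPotential Ω (fun _ => 0) (0 : VF m M) := by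
  refine ⟨contMDiff_const, fun x v => ?_⟩
  rw [dd_const]
  simp

end Symplectic

section InvariantBilin

variable {m : ℕ} {M : Type*} [TopologicalSpace M] [ChartedSpace (EuclideanSpace ℝ (Fin m)) M]

theorem mfderiv_perm_one (x : M) (v : TangentSpace (𝓡 m) x) :
    (mfderiv (𝓡 m) (𝓡 m) ((1 : Equiv.Perm M) : M → M) x v : EuclideanSpace ℝ (Fin m)) = v := by
  have h' : ((1 : Equiv.Perm M) : M → M) = id := rfl
  rw [h', mfderiv_id]
  rfl

variable [IsManifold (𝓡 m) ∞ M] (B : SmoothBilin m M)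

/-- The Lie derivative `L_X B` vanishes. -/
def SmoothBilin.IsInvariant (X : VF m M) : Prop :=
  ∀ (Y Z : VF m M) (x : M), X.der (fun y => B.form y (Y y) (Z y)) x =
    B.form x (⁅X, Y⁆ x) (Z x) + B.form x (Y x) (⁅X, Z⁆ x)

variable {B}

theorem SmoothBilin.IsInvariant.zero : B.IsInvariant 0 := by
  intro Y Z x
  rw [VF.zero_der]
  simp

theorem SmoothBilin.IsInvariant.add {X X' : VF m M} (h : B.IsInvariant X) (h' : B.IsInvariant X') :
    B.IsInvariant (X + X') := by
  intro Y Z x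
  rw [VF.add_der, h, h', add_lie, add_lie]
  simp only [ContMDiffSection.coe_add, Pi.add_apply, map_add, LinearMap.add_apply]
  ring

theorem SmoothBilin.IsInvariant.smul (a : ℝ) {X : VF m M} (h : B.IsInvariant X) :
    B.IsInvariant (a • X) := by
  intro Y Z x
  rw [VF.smul_der, h, smul_lie, smul_lie]
  simp only [ContMDiffSection.coe_smul, Pi.smul_apply, map_smul, LinearMap.smul_apply, smul_eq_mul]
  ring

theorem SmoothBilin.IsInvariant.der_der {X X' : VF m M} (h : B.IsInvariant X)
    (h' : B.IsInvariant X') (Y Z : VF m M) (x : M) :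
    X.der (X'.der (fun y => B.form y (Y y) (Z y))) x =
      B.form x (⁅X, ⁅X', Y⁆⁆ x) (Z x) + B.form x (⁅X', Y⁆ x) (⁅X, Z⁆ x) +
      (B.form x (⁅X, Y⁆ x) (⁅X', Z⁆ x) + B.form x (Y x) (⁅X, ⁅X', Z⁆⁆ x)) := by
  rw [funext (h' Y Z), ← h, ← h]
  exact dd_add ((B.smooth _ _).mdiff x) ((B.smooth _ _).mdiff x) _

theorem SmoothBilin.IsInvariant.lie {X X' : VF m M} (h : B.IsInvariant X)
    (h' : B.IsInvariant X') : B.IsInvariant ⁅X, X'⁆ := by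
  intro Y Z x
  rw [bracket_der X X' (B.smooth Y Z), h.der_der h', h'.der_der h, lie_lie, lie_lie]
  simp only [ContMDiffSection.coe_sub, Pi.sub_apply, map_sub, LinearMap.sub_apply]
  ring

theorem IsFlow.bilin_zero {X : VF m M} {φ : ℝ → Equiv.Perm M} (hφ : IsFlow X φ) (x : M) (v w : TangentSpace (𝓡 m) x) :
    B.form (φ 0 x) (mfderiv (𝓡 m) (𝓡 m) (φ 0) x v) (mfderiv (𝓡 m) (𝓡 m) (φ 0) x w) =
      B.form x v w := by
  rw [hφ.1]
  have h1 := mfderiv_perm_one x v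
  have h2 := mfderiv_perm_one x w
  exact congrArg₂ (fun a b => B.form x a b) h1 h2

end InvariantBilin

section Stabilizer

variable {m : ℕ} {M : Type*} [TopologicalSpace M] [ChartedSpace (EuclideanSpace ℝ (Fin m)) M]
  {G : Type*} [Group G] [MulAction G M]

theorem mdifferentiable_orbit {k : ℕ} [TopologicalSpace G]
    [ChartedSpace (EuclideanSpace ℝ (Fin k)) G] [ContMDiffSMul (𝓡 k) (𝓡 m) ∞ G M] (x : M) :
    MDifferentiable (𝓡 k) (𝓡 m) (fun g : G => g • x) := by
  have h : ContMDiff (𝓡 k) (𝓡 m) ∞ (fun g : G => g • x) :=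
    contMDiff_id.smul contMDiff_const
  exact h.mdifferentiable (by simp)

variable [IsManifold (𝓡 m) ∞ M]

theorem preserves_of_mem_KK {Ω : SymplecticForm m M} {j : CompatibleACS Ω} (hinv : j.Invariant G)
    {φ : ZGH G Ω} (h : (QuotientGroup.mk φ : GG G Ω) ∈ KK G j) :
    Preserves (φ : Equiv.Perm M) j.J := by
  have h1 : (QuotientGroup.mk φ : GG G Ω) ∈ stabGG G j :=
    @connectedComponentIn_subset _ (topGG G Ω) _ _ _ h
  obtain ⟨ψ, hψ, hφψ⟩ := h1
  have h2 : ψ⁻¹ * φ ∈ ZcapG G Ω := QuotientGroup.eq.1 hφψ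
  have h3 : ψ⁻¹ * φ ∈ stabZ G j := by
    obtain ⟨g, hg⟩ := h2
    have : ((ψ⁻¹ * φ : ZGH G Ω) : Equiv.Perm M) = MulAction.toPermHom G M g := hg.symm
    change Preserves ((ψ⁻¹ * φ : ZGH G Ω) : Equiv.Perm M) j.J
    rw [this]
    exact hinv g
  have h4 := (stabZ G j).mul_mem hψ h3
  rw [mul_inv_cancel_left] at h4
  exact h4

end Stabilizer

section SymplecticFlows

variable {m : ℕ} {M : Type*} [TopologicalSpace M] [ChartedSpace (EuclideanSpace ℝ (Fin m)) M]
  [IsManifold (𝓡 m) ∞ M] [T2Space M]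

theorem IsFlow.symplectic {Ω : SymplecticForm m M} {X : VF m M} (hX : IsHamiltonianVF Ω X)
    {φ : ℝ → Equiv.Perm M} (hφ : IsFlow X φ) (t : ℝ) (x : M) (v w : TangentSpace (𝓡 m) x) :
    Ω.form (φ t x) (mfderiv (𝓡 m) (𝓡 m) (φ t) x v) (mfderiv (𝓡 m) (𝓡 m) (φ t) x w) =
      Ω.form x v w := by
  have hd : ∀ s, HasDerivAt (fun s => Ω.toBilin.form (φ s x) (mfderiv (𝓡 m) (𝓡 m) (φ s) x v)
      (mfderiv (𝓡 m) (𝓡 m) (φ s) x w)) 0 s := by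
    intro s
    obtain ⟨Y, hY⟩ := exists_VF_apply_eq (φ s x) (mfderiv (𝓡 m) (𝓡 m) (φ s) x v)
    obtain ⟨Z, hZ⟩ := exists_VF_apply_eq (φ s x) (mfderiv (𝓡 m) (𝓡 m) (φ s) x w)
    have h := hφ.hasDerivAt_bilin Ω.toBilin x v w s Y Z hY hZ
    rwa [hX.lieD_eq_zero] at h
  have h0 := is_const_of_deriv_eq_zero (fun s => (hd s).differentiableAt) (fun s => (hd s).deriv) t 0
  exact h0.trans (hφ.bilin_zero (B := Ω.toBilin) x v w)

theorem isKilling_of_isFlow {Ω : SymplecticForm m M} {j : CompatibleACS Ω} {X : VF m M}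
    (hX : IsHamiltonianVF Ω X) {φ : ℝ → Equiv.Perm M} (hφ : IsFlow X φ)
    (hJ : ∀ t, Preserves (φ t) j.J) : IsKilling j.metric X := by
  intro Y Z x
  have hc : ∀ t, j.toBilin.form (φ t x) (mfderiv (𝓡 m) (𝓡 m) (φ t) x (Y x))
      (mfderiv (𝓡 m) (𝓡 m) (φ t) x (Z x)) = j.toBilin.form x (Y x) (Z x) := by
    intro t
    have h1 := hφ.symplectic hX t x (Y x) (j.J x (Z x))
    rw [hJ t x (Z x)] at h1
    exact h1
  have h0 : ∀ V : VF m M, V (φ 0 x) = mfderiv (𝓡 m) (𝓡 m) (φ 0) x (V x) := by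
    intro V
    rw [hφ.1]
    exact (mfderiv_perm_one x (V x)).symm
  have hd := hφ.hasDerivAt_bilin j.toBilin x (Y x) (Z x) 0 Y Z (h0 Y) (h0 Z)
  simp only [hc] at hd
  have h2 := hd.unique (hasDerivAt_const (0 : ℝ) _)
  rw [hφ.1] at h2
  change dd (fun y => j.metric y (Y y) (Z y)) x (X x) - j.metric x (⁅X, Y⁆ x) (Z x)
    - j.metric x (Y x) (⁅X, Z⁆ x) = 0 at h2
  linarith

/-- A vector field that is invariant under a flow commutes with the generator of the flow. -/
theorem IsFlow.bracket_eq_zero {X Y : VF m M} {φ : ℝ → Equiv.Perm M} (hφ : IsFlow Y φ)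
    (h : ∀ t x, mfderiv (𝓡 m) (𝓡 m) (φ t) x (X x) = X (φ t x)) : ⁅Y, X⁆ = 0 := by
  have key : ∀ (u : M → ℝ), Smooth (m := m) u → ∀ x, dd u x (⁅Y, X⁆ x) = 0 := by
    intro u hu x
    have h1 := hφ.hasDerivAt_dd hu x (X x) 0
    simp only [h] at h1
    have h2 := (hφ.hasDerivAt (X.der_smooth hu) x 0).unique h1
    rw [hφ.1] at h2
    have h3 := bracket_der Y X hu x
    have h4 : Y.der (X.der u) x = X.der (Y.der u) x := h2
    rw [h4, sub_self] at h3
    exact h3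
  ext1 x
  obtain ⟨u, e, hu, hfr⟩ := exists_coordinate_frame (m := m) x
  rw [hfr.self_of_nhds.2.2 (⁅Y, X⁆ x)]
  simp [key _ (hu _)]

variable {G : Type*} [Group G] [MulAction G M]

section Fundamental

variable {k : ℕ} [TopologicalSpace G] [ChartedSpace (EuclideanSpace ℝ (Fin k)) G]
  [ContMDiffSMul (𝓡 k) (𝓡 m) ∞ G M]

theorem mfderiv_fundamentalVF {X : VF m M} (hX : X ∈ fundamentalVF m k M G) {φ : M → M}
    (hφ : ContMDiff (𝓡 m) (𝓡 m) ∞ φ) (hc : ∀ (g : G) x, φ (g • x) = g • φ x) (x : M) :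
    mfderiv (𝓡 m) (𝓡 m) φ x (X x) = X (φ x) := by
  obtain ⟨ξ, hξ⟩ := hX
  have hφ' : MDifferentiableAt (𝓡 m) (𝓡 m) φ ((1 : G) • x) := hφ.mdifferentiable (by simp) _
  have h1 := mfderiv_comp (1 : G) hφ' (mdifferentiable_orbit (m := m) (k := k) (G := G) x 1)
  have h2 : φ ∘ (fun g : G => g • x) = fun g : G => g • φ x := funext fun g => hc g x
  rw [h2] at h1
  have h3 := congrArg (fun T : EuclideanSpace ℝ (Fin k) →L[ℝ] EuclideanSpace ℝ (Fin m) => T ξ) h1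
  have h4 : mfderiv (𝓡 m) (𝓡 m) φ ((1 : G) • x) = mfderiv (𝓡 m) (𝓡 m) φ x := by
    rw [one_smul]
  refine Eq.trans ?_ (Eq.trans h3.symm (hξ (φ x)).symm)
  have h5 := congrArg (fun T : EuclideanSpace ℝ (Fin m) →L[ℝ] EuclideanSpace ℝ (Fin m) =>
    T (mfderiv (𝓡 k) (𝓡 m) (fun g : G => g • x) 1 ξ)) h4
  exact (congrArg (mfderiv (𝓡 m) (𝓡 m) φ x) (hξ x)).trans h5.symm

theorem bracket_fundamentalVF {Ω : SymplecticForm m M} {X : VF m M}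
    (hX : X ∈ fundamentalVF m k M G) {Y : VF m M} (hY : Y ∈ zz G Ω) : ⁅Y, X⁆ = 0 := by
  induction hY using LieSubalgebra.lieSpan_induction with
  | mem Y hY =>
    obtain ⟨-, φ, hφ, hZ⟩ := hY
    refine hφ.bracket_eq_zero fun t x => ?_
    refine mfderiv_fundamentalVF hX (hφ.contMDiff t) (fun g x => ?_) x
    have := Subgroup.mem_centralizer_iff.1 (hZ t).2 (MulAction.toPermHom G M g) ⟨g, rfl⟩
    exact (congrArg (fun f : Equiv.Perm M => f x) this).symm
  | zero => simp
  | add Y Z _ _ hY hZ => rw [add_lie, hY, hZ, add_zero]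
  | smul a Y _ hY => rw [smul_lie, hY, smul_zero]
  | lie Y Z _ _ hY hZ => rw [lie_lie, hY, hZ, lie_zero, lie_zero, sub_zero]

theorem bracket_gcapz {Ω : SymplecticForm m M} {X : zz G Ω} (hX : X ∈ gcapz G k Ω)
    (Y : zz G Ω) : ⁅Y, X⁆ = 0 := by
  induction hX using LieSubmodule.lieSpan_induction generalizing Y with
  | mem X hX => exact Subtype.ext (bracket_fundamentalVF (k := k) hX Y.2)
  | zero => simp
  | add X Z _ _ hX hZ => rw [lie_add, hX, hZ, add_zero]
  | smul a X _ hX => rw [lie_smul, hX, smul_zero]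
  | lie W X _ hX => rw [hX, lie_zero]

end Fundamental

theorem isHamiltonianVF_of_mem_zz {Ω : SymplecticForm m M} {X : VF m M} (hX : X ∈ zz G Ω) :
    IsHamiltonianVF Ω X := by
  induction hX using LieSubalgebra.lieSpan_induction with
  | mem X hX => exact hX.1
  | zero => exact ⟨_, IsPotential.zero Ω⟩
  | add X Y _ _ hX hY => exact ⟨_, hX.choose_spec.add hY.choose_spec⟩
  | smul a X _ hX => exact ⟨_, hX.choose_spec.smul a⟩
  | lie X Y _ _ hX hY => exact ⟨_, hY.choose_spec.bracket hX⟩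

/-- The hamiltonian vector fields in `𝔷` that are Killing. -/
def killingZZ (G : Type*) [Group G] [MulAction G M] {Ω : SymplecticForm m M}
    (j : CompatibleACS Ω) : LieSubalgebra ℝ (zz G Ω) where
  carrier := {X | IsKilling j.metric (X : VF m M)}
  zero_mem' := SmoothBilin.IsInvariant.zero (B := j.toBilin)
  add_mem' h h' := SmoothBilin.IsInvariant.add (B := j.toBilin) h h'
  smul_mem' a _ h := SmoothBilin.IsInvariant.smul (B := j.toBilin) a h
  lie_mem' h h' := SmoothBilin.IsInvariant.lie (B := j.toBilin) h h'

end SymplecticFlows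

section ChartVolume

variable {m : ℕ} {M : Type*} [TopologicalSpace M] [ChartedSpace (EuclideanSpace ℝ (Fin m)) M]

variable (m) in
theorem measurableSet_chart_image [MeasurableSpace M] [BorelSpace M] (p : M) {B : Set M}
    (hB : MeasurableSet B) (hBs : B ⊆ (chartAt (EuclideanSpace ℝ (Fin m)) p).source) :
    MeasurableSet (chartAt (EuclideanSpace ℝ (Fin m)) p '' B) := by
  set c := chartAt (EuclideanSpace ℝ (Fin m)) p
  have h1 : c '' B = Subtype.val '' ((c.target.domRestrict c.symm) ⁻¹' B) := by
    ext y
    constructor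
    · rintro ⟨x, hx, rfl⟩
      refine ⟨⟨c x, c.map_source (hBs hx)⟩, ?_, rfl⟩
      change c.symm (c x) ∈ B
      rwa [c.left_inv (hBs hx)]
    · rintro ⟨⟨y, hy⟩, hyB, rfl⟩
      exact ⟨c.symm y, hyB, c.right_inv hy⟩
  rw [h1]
  exact c.open_target.measurableSet.subtype_image
    (c.continuousOn_symm.domRestrict.measurable hB)

variable [IsManifold (𝓡 m) ∞ M]

/-- The density `√|det Ω_{ij}|` of the symplectic volume in the preferred chart at `p`. -/
def volumeDensity (Ω : SymplecticForm m M) (p : M) (y : EuclideanSpace ℝ (Fin m)) : ENNReal :=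
  ENNReal.ofReal (Real.sqrt |(coeff (fun z v w => Ω.form z v w) p y).det|)

/-- The symplectic volume on the domain of the preferred chart at `p`. -/
def chartVolume [MeasurableSpace M] (Ω : SymplecticForm m M) (p : M) : Measure M :=
  Measure.map (chartAt (EuclideanSpace ℝ (Fin m)) p).symm
    ((volume.restrict (chartAt (EuclideanSpace ℝ (Fin m)) p).target).withDensity (volumeDensity Ω p))

theorem chartVolume_apply [MeasurableSpace M] [BorelSpace M] (Ω : SymplecticForm m M) (p : M)
    {B : Set M} (hB : MeasurableSet B)
    (hBs : B ⊆ (chartAt (EuclideanSpace ℝ (Fin m)) p).source) :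
    chartVolume Ω p B =
      ∫⁻ y in chartAt (EuclideanSpace ℝ (Fin m)) p '' B, volumeDensity Ω p y := by
  unfold chartVolume
  set c := chartAt (EuclideanSpace ℝ (Fin m)) p
  have h1 : AEMeasurable c.symm ((volume.restrict c.target).withDensity (volumeDensity Ω p)) :=
    (c.continuousOn_symm.aemeasurable c.open_target.measurableSet).mono_ac
      (withDensity_absolutelyContinuous _ _)
  rw [Measure.map_apply_of_aemeasurable h1 hB, withDensity_apply',
    Measure.restrict_restrict' c.open_target.measurableSet]
  congr 2
  ext y
  constructor
  · rintro ⟨hy, hyt⟩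
    exact ⟨c.symm y, hy, c.right_inv hyt⟩
  · rintro ⟨x, hx, rfl⟩
    exact ⟨by simpa [c.left_inv (hBs hx)] using hx, c.map_source (hBs hx)⟩

/-- The matrix of a bilinear form transforms by congruence. -/
theorem det_coeff_eq (Ω : SymplecticForm m M) {φ : M → M} (p q : M)
    (hsymp : ∀ x (v w : TangentSpace (𝓡 m) x), Ω.form (φ x) (mfderiv (𝓡 m) (𝓡 m) φ x v)
      (mfderiv (𝓡 m) (𝓡 m) φ x w) = Ω.form x v w) (hφ : ContMDiff (𝓡 m) (𝓡 m) ∞ φ)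
    {y : EuclideanSpace ℝ (Fin m)} (hy : y ∈ (chartAt (EuclideanSpace ℝ (Fin m)) p).target)
    (hyq : φ ((chartAt (EuclideanSpace ℝ (Fin m)) p).symm y) ∈
      (chartAt (EuclideanSpace ℝ (Fin m)) q).source) :
    ∃ D : EuclideanSpace ℝ (Fin m) →L[ℝ] EuclideanSpace ℝ (Fin m),
      HasFDerivAt (fun z => chartAt (EuclideanSpace ℝ (Fin m)) q
        (φ ((chartAt (EuclideanSpace ℝ (Fin m)) p).symm z))) D y ∧
      (coeff (fun z v w => Ω.form z v w) p y).det = D.det ^ 2 *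
        (coeff (fun z v w => Ω.form z v w) q (chartAt (EuclideanSpace ℝ (Fin m)) q
          (φ ((chartAt (EuclideanSpace ℝ (Fin m)) p).symm y)))).det := by
  set c := chartAt (EuclideanSpace ℝ (Fin m)) p
  set d := chartAt (EuclideanSpace ℝ (Fin m)) q
  let x := c.symm y
  let E := EuclideanSpace ℝ (Fin m)
  let A : E →L[ℝ] E := mfderiv (𝓡 m) (𝓡 m) c.symm y
  let P : E →L[ℝ] E := mfderiv (𝓡 m) (𝓡 m) φ x
  let Q : E →L[ℝ] E := mfderiv (𝓡 m) (𝓡 m) d (φ x)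
  let R : E →L[ℝ] E := mfderiv (𝓡 m) (𝓡 m) d.symm (d (φ x))
  have hc : MDifferentiableAt (𝓡 m) (𝓡 m) c.symm y :=
    (mdifferentiable_chart p).mdifferentiableAt_symm hy
  have hP : MDifferentiableAt (𝓡 m) (𝓡 m) φ x := hφ.mdifferentiable (by simp) x
  have hd : MDifferentiableAt (𝓡 m) (𝓡 m) d (φ x) := (mdifferentiable_chart q).mdifferentiableAt hyq
  have hRQ : ∀ v, R (Q v) = v := fun v =>
    congrArg (fun T : E →L[ℝ] E => T v) ((mdifferentiable_chart q).symm_comp_deriv hyq)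
  have hD : HasFDerivAt (fun z => d (φ (c.symm z))) (Q.comp (P.comp A)) y :=
    (hd.hasMFDerivAt.comp y (hP.hasMFDerivAt.comp y hc.hasMFDerivAt)).hasFDerivAt
  refine ⟨Q.comp (P.comp A), hD, ?_⟩
  let D : E →L[ℝ] E := Q.comp (P.comp A)
  let form : M → E → E → ℝ := fun z v w => Ω.form z v w
  let N : Matrix (Fin m) (Fin m) ℝ := LinearMap.toMatrix (EuclideanSpace.basisFun (Fin m) ℝ).toBasis
    (EuclideanSpace.basisFun (Fin m) ℝ).toBasis (D : E →ₗ[ℝ] E)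
  have hN : ∀ i j, N i j = D (EuclideanSpace.single j 1) i := by
    intro i j
    simp [N, LinearMap.toMatrix_apply]
  have hdet : N.det = D.det := LinearMap.det_toMatrix _ _
  have hexp : ∀ i, P (A (EuclideanSpace.single i 1)) =
      ∑ a, N a i • R (EuclideanSpace.single a 1) := by
    intro i
    have h1 : D (EuclideanSpace.single i 1) = ∑ a, N a i • EuclideanSpace.single a (1 : ℝ) := by
      ext b
      simp [hN, Pi.single_apply]
    have h2 := congrArg R h1
    rw [map_sum] at h2
    simp only [map_smul] at h2
    rw [← h2]
    exact (hRQ _).symm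
  have hmat : coeff (fun z v w => Ω.form z v w) p y =
      Nᵀ * coeff (fun z v w => Ω.form z v w) q (d (φ x)) * N := by
    ext i j
    have h1 : coeff (fun z v w => Ω.form z v w) p y i j =
        form (φ x) (P (A (EuclideanSpace.single i 1))) (P (A (EuclideanSpace.single j 1))) :=
      (hsymp x _ _).symm
    have h2 : ∀ a b, coeff (fun z v w => Ω.form z v w) q (d (φ x)) a b =
        form (φ x) (R (EuclideanSpace.single a 1)) (R (EuclideanSpace.single b 1)) := by
      intro a b
      change form (d.symm (d (φ x))) _ _ = _
      rw [d.left_inv hyq]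
      rfl
    rw [h1, Matrix.mul_apply]
    refine (bilin_expand (Ω.toBilin.form (φ x)) (hexp i) (hexp j)).trans ?_
    rw [Finset.sum_comm]
    refine Finset.sum_congr rfl fun b _ => ?_
    rw [Matrix.mul_apply, Finset.sum_mul]
    refine Finset.sum_congr rfl fun a _ => ?_
    rw [h2, Matrix.transpose_apply, mul_comm (N a i)]
    rfl
  rw [hmat, Matrix.det_mul, Matrix.det_mul, Matrix.det_transpose, hdet]
  ring

theorem chartVolume_image [MeasurableSpace M] [BorelSpace M] (Ω : SymplecticForm m M) {φ : M → M}
    (p q : M)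
    (hsymp : ∀ x (v w : TangentSpace (𝓡 m) x), Ω.form (φ x) (mfderiv (𝓡 m) (𝓡 m) φ x v)
      (mfderiv (𝓡 m) (𝓡 m) φ x w) = Ω.form x v w) (hφ : ContMDiff (𝓡 m) (𝓡 m) ∞ φ)
    (hinj : Function.Injective φ) {B : Set M} (hB : MeasurableSet B)
    (hBp : B ⊆ (chartAt (EuclideanSpace ℝ (Fin m)) p).source) (hφB : MeasurableSet (φ '' B))
    (hBq : φ '' B ⊆ (chartAt (EuclideanSpace ℝ (Fin m)) q).source) :
    chartVolume Ω q (φ '' B) = chartVolume Ω p B := by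
  rw [chartVolume_apply Ω q hφB hBq, chartVolume_apply Ω p hB hBp]
  have hloc := fun y => det_coeff_eq Ω p q hsymp hφ (y := y)
  have hms := measurableSet_chart_image m p hB hBp
  set c := chartAt (EuclideanSpace ℝ (Fin m)) p
  set d := chartAt (EuclideanSpace ℝ (Fin m)) q
  let ψ : EuclideanSpace ℝ (Fin m) → EuclideanSpace ℝ (Fin m) := fun z => d (φ (c.symm z))
  have himg : d '' (φ '' B) = ψ '' (c '' B) := by
    rw [image_image, image_image]
    exact image_congr fun x hx => by simp [ψ, c.left_inv (hBp hx)]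
  have hs : ∀ y ∈ c '' B, y ∈ c.target ∧ φ (c.symm y) ∈ d.source := by
    rintro _ ⟨x, hx, rfl⟩
    rw [c.left_inv (hBp hx)]
    exact ⟨c.map_source (hBp hx), hBq ⟨x, hx, rfl⟩⟩
  have hψinj : InjOn ψ (c '' B) := by
    intro y hy z hz hyz
    have h1 := d.injOn (hs y hy).2 (hs z hz).2 hyz
    exact c.symm.injOn (hs y hy).1 (hs z hz).1 (hinj h1)
  have hder : ∀ y ∈ c '' B, HasFDerivWithinAt ψ (fderiv ℝ ψ y) (c '' B) y := by
    intro y hy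
    obtain ⟨D, hD, -⟩ := hloc y (hs y hy).1 (hs y hy).2
    exact hD.differentiableAt.hasFDerivAt.hasFDerivWithinAt
  rw [himg, lintegral_image_eq_lintegral_abs_det_fderiv_mul volume hms hder hψinj]
  refine setLIntegral_congr_fun hms fun y hy => ?_
  obtain ⟨D, hD, hdet⟩ := hloc y (hs y hy).1 (hs y hy).2
  have hD' : fderiv ℝ ψ y = D := hD.fderiv
  rw [hD']
  unfold volumeDensity
  rw [hdet, abs_mul, abs_pow, Real.sqrt_mul (by positivity), Real.sqrt_sq (abs_nonneg _),
    ENNReal.ofReal_mul (abs_nonneg _)]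

theorem det_coeff_ne_zero (Ω : SymplecticForm m M) (p : M) {y : EuclideanSpace ℝ (Fin m)}
    (hy : y ∈ (chartAt (EuclideanSpace ℝ (Fin m)) p).target) :
    (coeff (fun z v w => Ω.form z v w) p y).det ≠ 0 := by
  set c := chartAt (EuclideanSpace ℝ (Fin m)) p
  let E := EuclideanSpace ℝ (Fin m)
  let x := c.symm y
  let A : E →L[ℝ] E := mfderiv (𝓡 m) (𝓡 m) c.symm y
  have hbij : Function.Bijective A := (mdifferentiable_chart p).symm.mfderiv_bijective hy
  intro h0
  obtain ⟨a, ha, ha0⟩ := Matrix.exists_vecMul_eq_zero_iff.2 h0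
  let v : E := WithLp.toLp 2 a
  have hexp : ∀ w : E, A w = ∑ i, w i • A (EuclideanSpace.single i 1) := by
    intro w
    have h1 : w = ∑ i, w i • EuclideanSpace.single i (1 : ℝ) := by
      ext b
      simp [Pi.single_apply]
    conv_lhs => rw [h1]
    rw [map_sum]
    simp only [map_smul]
  have hv : (A v : E) = 0 := by
    refine Ω.nondegenerate x (A v) fun w => ?_
    obtain ⟨w, rfl⟩ := hbij.2 w
    refine (bilin_expand (Ω.toBilin.form x) (hexp v) (hexp w)).trans ?_
    rw [Finset.sum_comm]
    refine Finset.sum_eq_zero fun j _ => ?_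
    have h1 := congrFun ha0 j
    rw [Matrix.vecMul, dotProduct] at h1
    rw [← Finset.sum_mul]
    refine mul_eq_zero_of_left (Eq.trans (Finset.sum_congr rfl fun i _ => ?_) h1) _
    rw [mul_comm]
    rfl
  have : v = 0 := hbij.1 (hv.trans (map_zero A).symm)
  exact ha (congrArg WithLp.ofLp this)

theorem volumeDensity_bounds [T2Space M] (Ω : SymplecticForm m M) (p : M) :
    ∃ δ K : ℝ, 0 < δ ∧ ∀ᶠ q in nhds p,
      ENNReal.ofReal δ ≤ volumeDensity Ω p (chartAt (EuclideanSpace ℝ (Fin m)) p q) ∧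
      volumeDensity Ω p (chartAt (EuclideanSpace ℝ (Fin m)) p q) ≤ ENNReal.ofReal K := by
  obtain ⟨u, e, -, hfr⟩ := exists_coordinate_frame (m := m) p
  set c := chartAt (EuclideanSpace ℝ (Fin m)) p
  let F : M → ℝ := fun q =>
    Real.sqrt |(Matrix.of fun i j => Ω.form q (e i q) (e j q) : Matrix (Fin m) (Fin m) ℝ).det|
  have hF : Continuous F := by
    refine Real.continuous_sqrt.comp (continuous_abs.comp ?_)
    refine Continuous.matrix_det ?_
    exact continuous_matrix fun i j => (Ω.smooth_apply (e i) (e j)).continuous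
  have hFeq : ∀ᶠ q in nhds p, volumeDensity Ω p (c q) = ENNReal.ofReal (F q) := by
    filter_upwards [hfr] with q hq
    unfold volumeDensity
    congr 4
    ext i j
    let form : M → EuclideanSpace ℝ (Fin m) → EuclideanSpace ℝ (Fin m) → ℝ :=
      fun z v w => Ω.form z v w
    change form (c.symm (c q)) _ _ = form q (e i q) (e j q)
    rw [c.left_inv hq.1, hq.2.1 i, hq.2.1 j]
    rfl
  have hpos : 0 < F p := by
    have h1 := det_coeff_ne_zero Ω p (mem_chart_target _ p)
    have h2 := hFeq.self_of_nhds
    unfold volumeDensity at h2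
    have h3 : 0 < ENNReal.ofReal (F p) := by
      rw [← h2, ENNReal.ofReal_pos]
      exact Real.sqrt_pos.2 (abs_pos.2 h1)
    exact ENNReal.ofReal_pos.1 h3
  refine ⟨F p / 2, F p + 1, by positivity, ?_⟩
  filter_upwards [hFeq, hF.continuousAt.eventually (lt_mem_nhds (half_lt_self hpos)),
    hF.continuousAt.eventually (gt_mem_nhds (lt_add_one (F p)))] with q h1 h2 h3
  rw [h1]
  exact ⟨ENNReal.ofReal_le_ofReal h2.le, ENNReal.ofReal_le_ofReal h3.le⟩

end ChartVolume

section Volume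

theorem measure_eq_sum_inter {α ι : Type*} [Fintype ι] [MeasurableSpace α] (μ : Measure α)
    {A : ι → Set α} (hA : ∀ i, MeasurableSet (A i)) (hd : Pairwise (Function.onFun Disjoint A))
    (hU : ⋃ i, A i = univ) {S : Set α} (hS : MeasurableSet S) : μ S = ∑ i, μ (S ∩ A i) := by
  have h : S = ⋃ i, S ∩ A i := by rw [← inter_iUnion, hU, inter_univ]
  conv_lhs => rw [h]
  rw [measure_iUnion (fun i j hij => (hd hij).mono inter_subset_right inter_subset_right)
    (fun i => hS.inter (hA i)), tsum_fintype]

variable {m : ℕ} {M : Type*} [TopologicalSpace M] [ChartedSpace (EuclideanSpace ℝ (Fin m)) M]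

theorem Smooth.integrable [CompactSpace M] [MeasurableSpace M] [BorelSpace M] (μ : Measure M) [IsFiniteMeasure μ] {u : M → ℝ}
    (hu : Smooth (m := m) u) : Integrable u μ := by
  refine hu.continuous.integrable_of_hasCompactSupport ?_
  exact HasCompactSupport.of_compactSpace u

variable [IsManifold (𝓡 m) ∞ M]

/-- `φ` preserves the symplectic form. -/
def IsSymplecticMap (Ω : SymplecticForm m M) (φ : M → M) : Prop :=
  ∀ (x : M) (v w : TangentSpace (𝓡 m) x), Ω.form (φ x) (mfderiv (𝓡 m) (𝓡 m) φ x v)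
      (mfderiv (𝓡 m) (𝓡 m) φ x w) = Ω.form x v w

variable [MeasurableSpace M] [BorelSpace M]

theorem chartVolume_eq (Ω : SymplecticForm m M) (p q : M) {B : Set M} (hB : MeasurableSet B)
    (hBp : B ⊆ (chartAt (EuclideanSpace ℝ (Fin m)) p).source)
    (hBq : B ⊆ (chartAt (EuclideanSpace ℝ (Fin m)) q).source) :
    chartVolume Ω q B = chartVolume Ω p B := by
  have h := chartVolume_image Ω (φ := id) p q (fun x v w => by rw [mfderiv_id]; rfl) contMDiff_id
    Function.injective_id hB hBp (by rwa [image_id]) (by rwa [image_id])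
  rwa [image_id] at h

variable [T2Space M]

theorem exists_isOpen_chartVolume_lt_top (Ω : SymplecticForm m M) (p : M) :
    ∃ U : Set M, IsOpen U ∧ p ∈ U ∧ U ⊆ (chartAt (EuclideanSpace ℝ (Fin m)) p).source ∧
      chartVolume Ω p U < ⊤ := by
  obtain ⟨δ, K, -, hb⟩ := volumeDensity_bounds Ω p
  have happ := fun B => chartVolume_apply Ω p (B := B)
  have hms := fun B => measurableSet_chart_image m p (B := B)
  have hsrc : (chartAt (EuclideanSpace ℝ (Fin m)) p).source ∈ nhds p :=
    (chartAt (EuclideanSpace ℝ (Fin m)) p).open_source.mem_nhds (mem_chart_source _ p)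
  have hcont : ContinuousAt (chartAt (EuclideanSpace ℝ (Fin m)) p) p :=
    (chartAt (EuclideanSpace ℝ (Fin m)) p).continuousAt (mem_chart_source _ p)
  set c := chartAt (EuclideanSpace ℝ (Fin m)) p
  obtain ⟨U, hU, hUo, hpU⟩ := eventually_nhds_iff.1
    ((hb.and hsrc).and (hcont.eventually (Metric.ball_mem_nhds (c p) one_pos)))
  have hUs : U ⊆ c.source := fun q hq => (hU q hq).1.2
  refine ⟨U, hUo, hpU, hUs, ?_⟩
  rw [happ U hUo.measurableSet hUs]
  calc ∫⁻ y in c '' U, volumeDensity Ω p y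
      ≤ ∫⁻ _ in c '' U, ENNReal.ofReal K := by
        refine setLIntegral_mono' (hms U hUo.measurableSet hUs) ?_
        rintro _ ⟨q, hq, rfl⟩
        exact (hU q hq).1.1.2
    _ = ENNReal.ofReal K * volume (c '' U) := setLIntegral_const _ _
    _ ≤ ENNReal.ofReal K * volume (Metric.ball (c p) 1) := by
        gcongr
        rintro _ ⟨q, hq, rfl⟩
        exact (hU q hq).2
    _ < ⊤ := ENNReal.mul_lt_top ENNReal.ofReal_lt_top measure_ball_lt_top

theorem chartVolume_pos (Ω : SymplecticForm m M) (p : M) {U : Set M} (hU : IsOpen U) (hp : p ∈ U)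
    (hUs : U ⊆ (chartAt (EuclideanSpace ℝ (Fin m)) p).source) : 0 < chartVolume Ω p U := by
  obtain ⟨δ, K, hδ, hb⟩ := volumeDensity_bounds Ω p
  obtain ⟨V, hV, hVo, hpV⟩ := eventually_nhds_iff.1 (hb.and (hU.mem_nhds hp))
  have hVU : V ⊆ U := fun q hq => (hV q hq).2
  have hVs := hVU.trans hUs
  refine lt_of_lt_of_le ?_ (measure_mono hVU)
  rw [chartVolume_apply Ω p hVo.measurableSet hVs]
  have hms := measurableSet_chart_image m p hVo.measurableSet hVs
  set c := chartAt (EuclideanSpace ℝ (Fin m)) p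
  have hopen : IsOpen (c '' V) := c.isOpen_image_of_subset_source hVo hVs
  calc 0 < ENNReal.ofReal δ * volume (c '' V) :=
        ENNReal.mul_pos (ENNReal.ofReal_pos.2 hδ).ne'
          (hopen.measure_pos volume ⟨c p, p, hpV, rfl⟩).ne'
    _ = ∫⁻ _ in c '' V, ENNReal.ofReal δ := (setLIntegral_const _ _).symm
    _ ≤ ∫⁻ y in c '' V, volumeDensity Ω p y := by
        refine setLIntegral_mono' hms ?_
        rintro _ ⟨q, hq, rfl⟩
        exact (hV q hq).1.1

/-- The symplectic volume on a compact symplectic manifold: a finite measure with full support that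
is invariant under symplectic diffeomorphisms. -/
theorem exists_symplectic_volume [CompactSpace M] (Ω : SymplecticForm m M) :
    ∃ μ : Measure M, IsFiniteMeasure μ ∧ μ.IsOpenPosMeasure ∧
      ∀ φ : Equiv.Perm M, φ ∈ Diff m M → IsSymplecticMap Ω φ → MeasurePreserving φ μ μ := by
  choose U hUo hpU hUs hUfin using exists_isOpen_chartVolume_lt_top Ω
  obtain ⟨t, ht⟩ := isCompact_univ.elim_finite_subcover U hUo (fun x _ => mem_iUnion.2 ⟨x, hpU x⟩)
  let p : Fin t.card → M := fun i => t.equivFin.symm i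
  let A : Fin t.card → Set M := disjointed fun i => U (p i)
  have hAU : ∀ i, A i ⊆ U (p i) := fun i => disjointed_subset _ i
  have hAm : ∀ i, MeasurableSet (A i) := fun i =>
    disjointedRec (p := MeasurableSet) (fun s j hs => hs.diff (hUo _).measurableSet)
      (hUo _).measurableSet
  have hAd : Pairwise (Function.onFun Disjoint A) := disjoint_disjointed _
  have hAu : ⋃ i, A i = univ := by
    rw [iUnion_disjointed, eq_univ_iff_forall]
    intro x
    obtain ⟨y, hy, hxy⟩ := mem_iUnion₂.1 (ht (mem_univ x))
    exact mem_iUnion.2 ⟨t.equivFin ⟨y, hy⟩, by simpa [p] using hxy⟩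
  have hAs : ∀ i, A i ⊆ (chartAt (EuclideanSpace ℝ (Fin m)) (p i)).source :=
    fun i => (hAU i).trans (hUs _)
  let μ : Measure M := ∑ i, (chartVolume Ω (p i)).restrict (A i)
  have hμ : ∀ S, MeasurableSet S → μ S = ∑ i, chartVolume Ω (p i) (S ∩ A i) := by
    intro S hS
    simp [μ, Measure.restrict_apply hS]
  have hloc : ∀ q, ∀ B, MeasurableSet B → B ⊆ (chartAt (EuclideanSpace ℝ (Fin m)) q).source →
      μ B = chartVolume Ω q B := by
    intro q B hB hBq
    rw [hμ B hB, measure_eq_sum_inter (chartVolume Ω q) hAm hAd hAu hB]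
    exact Finset.sum_congr rfl fun i _ => chartVolume_eq Ω q (p i) (hB.inter (hAm i))
      (inter_subset_left.trans hBq) (inter_subset_right.trans (hAs i))
  refine ⟨μ, ⟨?_⟩, ⟨?_⟩, ?_⟩
  · rw [hμ univ MeasurableSet.univ]
    refine ENNReal.sum_lt_top.2 fun i _ => lt_of_le_of_lt (measure_mono ?_) (hUfin (p i))
    exact inter_subset_right.trans (hAU i)
  · rintro V hV ⟨x, hx⟩
    have hW : IsOpen (V ∩ (chartAt (EuclideanSpace ℝ (Fin m)) x).source) :=
      hV.inter (chartAt (EuclideanSpace ℝ (Fin m)) x).open_source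
    refine (lt_of_lt_of_le ?_ (measure_mono (inter_subset_left (s := V)
      (t := (chartAt (EuclideanSpace ℝ (Fin m)) x).source)))).ne'
    rw [hloc x _ hW.measurableSet inter_subset_right]
    exact chartVolume_pos Ω x hW ⟨hx, mem_chart_source _ x⟩ inter_subset_right
  · intro φ hφ hsymp
    have hmeas : Measurable φ := hφ.1.continuous.measurable
    let e : M ≃ₜ M := ⟨φ, hφ.1.continuous, hφ.2.continuous⟩
    have himg : ∀ S, MeasurableSet S → MeasurableSet (φ '' S) := fun S hS =>
      e.toMeasurableEquiv.measurableSet_image.2 hS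
    refine ⟨hmeas, Measure.ext fun B hB => ?_⟩
    rw [Measure.map_apply hmeas hB]
    have hpiece : ∀ i j, μ ((φ ⁻¹' B ∩ φ ⁻¹' (A j)) ∩ A i) = μ ((B ∩ A j) ∩ φ '' A i) := by
      intro i j
      have hS : MeasurableSet ((φ ⁻¹' B ∩ φ ⁻¹' (A j)) ∩ A i) :=
        ((hmeas hB).inter (hmeas (hAm j))).inter (hAm i)
      have hφS : φ '' ((φ ⁻¹' B ∩ φ ⁻¹' (A j)) ∩ A i) = (B ∩ A j) ∩ φ '' A i := by
        rw [← preimage_inter, image_preimage_inter]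
      have hSi : (φ ⁻¹' B ∩ φ ⁻¹' (A j)) ∩ A i ⊆
          (chartAt (EuclideanSpace ℝ (Fin m)) (p i)).source := inter_subset_right.trans (hAs i)
      have hSj : φ '' ((φ ⁻¹' B ∩ φ ⁻¹' (A j)) ∩ A i) ⊆
          (chartAt (EuclideanSpace ℝ (Fin m)) (p j)).source := by
        rw [hφS]
        exact (inter_subset_left.trans inter_subset_right).trans (hAs j)
      rw [← hφS, hloc (p i) _ hS hSi, hloc (p j) _ (himg _ hS) hSj]
      exact (chartVolume_image Ω (p i) (p j) hsymp hφ.1 φ.injective hS hSi (himg _ hS) hSj).symm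
    have hA'u : ⋃ i, φ '' A i = univ := by
      rw [← image_iUnion, hAu, image_univ, φ.surjective.range_eq]
    have hA'd : Pairwise (Function.onFun Disjoint fun i => φ '' A i) := fun i j hij =>
      (disjoint_image_iff φ.injective).2 (hAd hij)
    have hB'u : ⋃ j, φ ⁻¹' (A j) = univ := by
      rw [← preimage_iUnion, hAu, preimage_univ]
    have hB'd : Pairwise (Function.onFun Disjoint fun j => φ ⁻¹' (A j)) := fun i j hij =>
      (hAd hij).preimage φ
    rw [measure_eq_sum_inter μ (fun j => hmeas (hAm j)) hB'd hB'u (hmeas hB),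
      measure_eq_sum_inter μ hAm hAd hAu hB]
    refine Finset.sum_congr rfl fun j _ => ?_
    rw [measure_eq_sum_inter μ hAm hAd hAu ((hmeas hB).inter (hmeas (hAm j))),
      measure_eq_sum_inter μ (fun i => himg _ (hAm i)) hA'd hA'u (hB.inter (hAm j))]
    exact Finset.sum_congr rfl fun i _ => hpiece i j

/-- A vector field whose flow preserves a finite measure is divergence-free. -/
theorem IsFlow.integral_der_eq_zero [CompactSpace M] (μ : Measure M) [IsFiniteMeasure μ]
    {X : VF m M} {φ : ℝ → Equiv.Perm M} (hφ : IsFlow X φ)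
    (hμ : ∀ t, MeasurePreserving (φ t) μ μ) {u : M → ℝ} (hu : Smooth (m := m) u) :
    ∫ x, X.der u x ∂μ = 0 := by
  have hXu := X.der_smooth hu
  obtain ⟨C, hC⟩ : ∃ C, ∀ x, ‖X.der u x‖ ≤ C := by
    obtain ⟨C, hC⟩ := isCompact_univ.exists_bound_of_continuousOn hXu.continuous.continuousOn
    exact ⟨C, fun x => hC x (mem_univ x)⟩
  have hut : ∀ t, Smooth (m := m) (fun x => u (φ t x)) := fun t => hu.comp (hφ.contMDiff t)
  have hd := (hasDerivAt_integral_of_dominated_loc_of_deriv_le (μ := μ) (x₀ := (0 : ℝ))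
    (F := fun t x => u (φ t x)) (F' := fun t x => X.der u (φ t x)) (bound := fun _ => C)
    (s := univ) Filter.univ_mem
    (Filter.Eventually.of_forall fun t => ((hut t).integrable μ).aestronglyMeasurable)
    ((hut 0).integrable μ)
    ((Smooth.integrable (m := m) μ (hXu.comp (hφ.contMDiff 0))).aestronglyMeasurable)
    (Filter.Eventually.of_forall fun x t _ => hC _) (integrable_const C)
    (Filter.Eventually.of_forall fun x t _ => hφ.hasDerivAt hu x t)).2
  have hconst : ∀ t, ∫ x, u (φ t x) ∂μ = ∫ x, u x ∂μ := by
    intro t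
    have h := integral_map (μ := μ) (φ := φ t) (hμ t).measurable.aemeasurable (f := u)
      (by rw [(hμ t).map_eq]; exact (hu.integrable μ).aestronglyMeasurable)
    rw [(hμ t).map_eq] at h
    exact h.symm
  simp only [hconst] at hd
  have h0 := hd.unique (hasDerivAt_const (0 : ℝ) _)
  rw [hφ.1] at h0
  exact h0

end Volume

section Splitting

/-- If the commutators meet an ideal `I` only in `0`, then a subalgebra of `L ⧸ I` that consists of
classes of elements of a subalgebra `P` lifts to `P`. -/
theorem exists_lieHom_lift {L : Type*} [LieRing L] [LieAlgebra ℝ L] (I : LieIdeal ℝ L)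
    (P : LieSubalgebra ℝ L) (K : LieSubalgebra ℝ (L ⧸ I))
    (hK : ∀ ξ ∈ K, ∃ x ∈ P, (LieSubmodule.Quotient.mk x : L ⧸ I) = ξ)
    (hI : ∀ x ∈ I, x ∈ Submodule.span ℝ {z : L | ∃ a b : L, ⁅a, b⁆ = z} → x = 0) :
    ∃ lift : K →ₗ⁅ℝ⁆ L, ∀ ξ : K,
      (LieSubmodule.Quotient.mk (lift ξ) : L ⧸ I) = ξ ∧ lift ξ ∈ P := by
  let D : Submodule ℝ L := Submodule.span ℝ {z : L | ∃ a b : L, ⁅a, b⁆ = z}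
  let N : Submodule ℝ L := I.toSubmodule ⊓ P.toSubmodule
  have hND : Disjoint N D := by
    rw [Submodule.disjoint_def]
    exact fun x hx hxD => hI x hx.1 hxD
  obtain ⟨C, hC⟩ := exists_isCompl (N ⊔ D)
  have hdis : Disjoint N (D ⊔ C) := hND.disjoint_sup_right_of_disjoint_sup_left hC.disjoint
  have htop : N ⊔ (D ⊔ C) = ⊤ := by rw [← sup_assoc]; exact hC.sup_eq_top
  have hex : ∀ ξ : K, ∃ x ∈ P, x ∈ D ⊔ C ∧ (LieSubmodule.Quotient.mk x : L ⧸ I) = ξ := by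
    intro ξ
    obtain ⟨x, hxP, hx⟩ := hK ξ ξ.2
    obtain ⟨n, hn, w, hw, rfl⟩ := Submodule.mem_sup.1 (htop ▸ Submodule.mem_top : x ∈ N ⊔ (D ⊔ C))
    refine ⟨w, ?_, hw, ?_⟩
    · simpa using P.sub_mem hxP hn.2
    · rw [← hx]
      refine (Submodule.Quotient.eq _).2 ?_
      simpa using hn.1
  choose f hfP hfW hf using hex
  have huniq : ∀ x ∈ P, x ∈ D ⊔ C → ∀ y ∈ P, y ∈ D ⊔ C →
      (LieSubmodule.Quotient.mk x : L ⧸ I) = LieSubmodule.Quotient.mk y → x = y := by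
    intro x hx hxW y hy hyW hxy
    have h1 : x - y ∈ I := (Submodule.Quotient.eq _).1 hxy
    exact sub_eq_zero.1 (Submodule.disjoint_def.1 hdis _ ⟨h1, P.sub_mem hx hy⟩
      ((D ⊔ C).sub_mem hxW hyW))
  refine ⟨{ toFun := f, map_add' := ?_, map_smul' := ?_, map_lie' := ?_ }, fun ξ => ⟨hf ξ, hfP ξ⟩⟩
  · intro ξ η
    refine huniq _ (hfP _) (hfW _) _ (P.add_mem (hfP _) (hfP _))
      ((D ⊔ C).add_mem (hfW _) (hfW _)) ?_
    rw [hf]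
    exact congrArg₂ (· + ·) (hf ξ).symm (hf η).symm
  · intro a ξ
    refine huniq _ (hfP _) (hfW _) _ (P.smul_mem a (hfP _)) ((D ⊔ C).smul_mem a (hfW _)) ?_
    rw [hf]
    exact congrArg (a • ·) (hf ξ).symm
  · intro ξ η
    refine huniq _ (hfP _) (hfW _) _ (P.lie_mem (hfP _) (hfP _))
      (Submodule.mem_sup_left (Submodule.subset_span ⟨_, _, rfl⟩)) ?_
    rw [hf, LieSubmodule.Quotient.mk_bracket, hf, hf]
    rfl

end Splitting

section Centre

variable {m : ℕ} {M : Type*} [TopologicalSpace M] [ChartedSpace (EuclideanSpace ℝ (Fin m)) M]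
  [IsManifold (𝓡 m) ∞ M] [T2Space M] [CompactSpace M] [MeasurableSpace M] [BorelSpace M]

theorem Smooth.eq_zero_of_integral_sq {μ : Measure M} [IsFiniteMeasure μ] [μ.IsOpenPosMeasure]
    {u : M → ℝ} (hu : Smooth (m := m) u) (h : ∫ x, u x * u x ∂μ = 0) (x : M) : u x = 0 := by
  have hc : Continuous fun x => u x * u x := hu.continuous.mul hu.continuous
  have h1 := (integral_eq_zero_iff_of_nonneg (fun x => mul_self_nonneg (u x))
    (Smooth.integrable (m := m) μ (hu.mul hu))).1 h
  have h2 : (fun x => u x * u x) = 0 := (hc.ae_eq_iff_eq μ continuous_zero).1 h1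
  exact mul_self_eq_zero.1 (congrFun h2 x)

variable {G : Type*} [Group G] [MulAction G M] {Ω : SymplecticForm m M}

theorem integral_der_eq_zero_of_mem_zz {μ : Measure M} [IsFiniteMeasure μ]
    (hμ : ∀ φ : Equiv.Perm M, φ ∈ Diff m M → IsSymplecticMap Ω φ → MeasurePreserving φ μ μ)
    {X : VF m M} (hX : X ∈ zz G Ω) {u : M → ℝ} (hu : Smooth (m := m) u) :
    ∫ x, X.der u x ∂μ = 0 := by
  induction hX using LieSubalgebra.lieSpan_induction generalizing u with
  | mem X hX =>
    obtain ⟨hX, φ, hφ, hZ⟩ := hX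
    exact hφ.integral_der_eq_zero μ
      (fun t => hμ _ (Ham_le_Diff Ω (hZ t).1) (fun x v w => hφ.symplectic hX t x v w)) hu
  | zero => simp [VF.zero_der]
  | add X Y _ _ hX hY =>
    simp only [VF.add_der]
    rw [integral_add ((X.der_smooth hu).integrable μ) ((Y.der_smooth hu).integrable μ), hX hu, hY hu,
      add_zero]
  | smul a X _ hX =>
    simp only [VF.smul_der]
    rw [integral_const_mul, hX hu, mul_zero]
  | lie X Y _ _ hX hY =>
    simp only [bracket_der X Y hu]
    rw [integral_sub ((X.der_smooth (Y.der_smooth hu)).integrable μ)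
      ((Y.der_smooth (X.der_smooth hu)).integrable μ), hX (Y.der_smooth hu), hY (X.der_smooth hu),
      sub_zero]

/-- The potential of a central element of `𝔷` is constant along `𝔷`. -/
theorem der_potential_eq_zero {μ : Measure M} [IsFiniteMeasure μ] [μ.IsOpenPosMeasure]
    (hμ : ∀ φ : Equiv.Perm M, φ ∈ Diff m M → IsSymplecticMap Ω φ → MeasurePreserving φ μ μ)
    {X Y : VF m M} (hY : Y ∈ zz G Ω) (hXY : ⁅Y, X⁆ = 0) {f : M → ℝ} (hf : IsPotential Ω f X)
    (x : M) : Y.der f x = 0 := by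
  have h1 := hf.bracket (isHamiltonianVF_of_mem_zz hY)
  rw [hXY] at h1
  have h2 : ∀ x, Y.der (Y.der f) x = 0 := by
    intro x
    have := h1.2 x (Y x)
    exact this.symm.trans (by simp)
  have hYf := Y.der_smooth hf.1
  refine Smooth.eq_zero_of_integral_sq (μ := μ) hYf ?_ x
  have h3 := integral_der_eq_zero_of_mem_zz hμ hY (ContMDiff.mul hf.1 hYf)
  rw [← h3]
  refine integral_congr_ae (Filter.Eventually.of_forall fun x => ?_)
  refine Eq.trans ?_ (Y.der_mul hf.1 hYf x).symm
  rw [h2, mul_zero, zero_add]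

/-- A central element of `𝔷` that is a sum of commutators vanishes. -/
theorem eq_zero_of_central_of_mem_commutators {X : zz G Ω} (hX : ∀ Y : zz G Ω, ⁅Y, X⁆ = 0)
    (hXD : X ∈ Submodule.span ℝ {W : zz G Ω | ∃ Y Z : zz G Ω, ⁅Y, Z⁆ = W}) : X = 0 := by
  obtain ⟨μ, hfin, hopen, hμ⟩ := exists_symplectic_volume Ω
  have key : ∀ W ∈ Submodule.span ℝ {W : zz G Ω | ∃ Y Z : zz G Ω, ⁅Y, Z⁆ = W},
      ∃ h, IsPotential Ω h (W : VF m M) ∧ ∀ f : M → ℝ, Smooth (m := m) f →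
        (∀ Y ∈ zz G Ω, ∀ x, VF.der Y f x = 0) → ∫ x, f x * h x ∂μ = 0 := by
    intro W hW
    induction hW using Submodule.span_induction with
    | mem W hW =>
      obtain ⟨Y, Z, rfl⟩ := hW
      obtain ⟨z, hz⟩ := isHamiltonianVF_of_mem_zz Z.2
      refine ⟨_, hz.bracket (isHamiltonianVF_of_mem_zz Y.2), fun f hf hfY => ?_⟩
      rw [← integral_der_eq_zero_of_mem_zz hμ Y.2 (ContMDiff.mul hf hz.1)]
      refine integral_congr_ae (Filter.Eventually.of_forall fun x => ?_)
      refine Eq.trans ?_ (VF.der_mul (Y : VF m M) hf hz.1 x).symm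
      rw [hfY _ Y.2, mul_zero, add_zero]
    | zero => exact ⟨_, IsPotential.zero Ω, fun f _ _ => by simp⟩
    | add W W' _ _ hW hW' =>
      obtain ⟨h, hh, hhf⟩ := hW
      obtain ⟨h', hh', hhf'⟩ := hW'
      refine ⟨_, hh.add hh', fun f hf hfY => ?_⟩
      simp only [mul_add]
      have hi : ∀ {w : M → ℝ}, Smooth (m := m) w → Integrable (fun x => f x * w x) μ :=
        fun hw => Smooth.integrable (m := m) μ (ContMDiff.mul hf hw)
      rw [integral_add (hi hh.1) (hi hh'.1), hhf f hf hfY, hhf' f hf hfY, add_zero]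
    | smul a W _ hW =>
      obtain ⟨h, hh, hhf⟩ := hW
      refine ⟨_, hh.smul a, fun f hf hfY => ?_⟩
      simp only [mul_left_comm _ a]
      rw [integral_const_mul, hhf f hf hfY, mul_zero]
  obtain ⟨h, hh, hhf⟩ := key X hXD
  have hd : ∀ Y ∈ zz G Ω, ∀ x, VF.der Y h x = 0 := fun Y hY x =>
    der_potential_eq_zero hμ hY (congrArg Subtype.val (hX ⟨Y, hY⟩)) hh x
  have h0 : h = fun _ => 0 := funext (Smooth.eq_zero_of_integral_sq hh.1 (hhf h hh.1 hd))
  refine Subtype.ext (ContMDiffSection.ext fun x => Ω.nondegenerate x _ fun w => ?_)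
  rw [hh.2, h0, dd_const]

end Centre

section Lift

variable {m k : ℕ} {M : Type*} [TopologicalSpace M] [ChartedSpace (EuclideanSpace ℝ (Fin m)) M]
  [IsManifold (𝓡 m) ∞ M] [T2Space M] {G : Type*} [TopologicalSpace G]
  [ChartedSpace (EuclideanSpace ℝ (Fin k)) G] [Group G] [MulAction G M] {Ω : SymplecticForm m M}

theorem exists_killing_representative {j : CompatibleACS Ω} (hinv : j.Invariant G)
    {ξ : LieGG G k Ω} (hξ : ξ ∈ kk G k j) : ∃ X ∈ killingZZ G j, proj G k Ω X = ξ := by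
  induction hξ using LieSubalgebra.lieSpan_induction with
  | mem ξ hξ =>
    obtain ⟨X, hX, φ, hφ, hK⟩ := hξ
    exact ⟨X, isKilling_of_isFlow (isHamiltonianVF_of_mem_zz X.2) hφ
      fun t => preserves_of_mem_KK hinv (hK t), hX⟩
  | zero => exact ⟨0, zero_mem _, rfl⟩
  | add ξ η _ _ hξ hη =>
    obtain ⟨X, hX, rfl⟩ := hξ
    obtain ⟨Y, hY, rfl⟩ := hη
    exact ⟨X + Y, add_mem hX hY, rfl⟩
  | smul a ξ _ hξ =>
    obtain ⟨X, hX, rfl⟩ := hξ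
    exact ⟨a • X, (killingZZ G j).smul_mem a hX, rfl⟩
  | lie ξ η _ _ hξ hη =>
    obtain ⟨X, hX, rfl⟩ := hξ
    obtain ⟨Y, hY, rfl⟩ := hη
    exact ⟨⁅X, Y⁆, (killingZZ G j).lie_mem hX hY, LieSubmodule.Quotient.mk_bracket _ _ _⟩

end Lift

end HamAction

end

open HamAction
theorem lift_of_stabilizer_lie_algebra {m k : ℕ}
    {M : Type*} [TopologicalSpace M] [ChartedSpace (EuclideanSpace ℝ (Fin m)) M]
    [IsManifold (𝓡 m) ∞ M] [T2Space M] [CompactSpace M] [ConnectedSpace M]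
    [MeasurableSpace M] [BorelSpace M]
    {G : Type*} [TopologicalSpace G] [ChartedSpace (EuclideanSpace ℝ (Fin k)) G] [Group G]
    [LieGroup (𝓡 k) ∞ G] [T2Space G] [CompactSpace G] [ConnectedSpace G]
    [MulAction G M] [ContMDiffSMul (𝓡 k) (𝓡 m) ∞ G M]
    (Ω : SymplecticForm m M) (hG : IsHamiltonianAction G k Ω)
    (j₀ : CompatibleACS Ω) (hinv : j₀.Invariant G) (hint : j₀.Integrable)
    (hext : IsReducedScalarCurvature G k j₀ 0) :
    ∃ lift : kk G k j₀ →ₗ⁅ℝ⁆ zz G Ω,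
      (∀ ξ : kk G k j₀, proj G k Ω (lift ξ) = ξ) ∧
      ∀ ξ : kk G k j₀, IsHamiltonianVF Ω (lift ξ : VF m M) ∧
        IsKilling j₀.metric (lift ξ : VF m M) := by
  obtain ⟨lift, hlift⟩ := exists_lieHom_lift (gcapz G k Ω) (killingZZ G j₀) (kk G k j₀)
    (fun ξ hξ => exists_killing_representative hinv hξ)
    (fun X hX hXD => eq_zero_of_central_of_mem_commutators (bracket_gcapz hX) hXD)
  exact ⟨lift, fun ξ => (hlift ξ).1, fun ξ => ⟨isHamiltonianVF_of_mem_zz (lift ξ).2, (hlift ξ).2⟩⟩
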